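/- arXiv:0910.1962 — 8 statements merged into one kernel-verified Lean document; each statement's English description precedes it below -/
import Mathlib

section
/- Every pair (A ⊆ B) of finite abelian p-groups with p²A = 0 is isomorphic, as a pair, to a finite direct sum of pickets P_ℓ^m with ℓ ≤ min{2, m} and bipickets T_2^{m,r} with 1 ≤ r ≤ m−2. -/
/-!
Call a pair split if it has a picket or a bipicket as a direct summand; by induction on the order of
`B` it suffices to split every pair with `B ≠ 0`. If some `a = p ^ k • y` in `A` has `p • a` nonzero
and of height exactly `k + 1`, then a picket `P_2^{k+2}` on `y` splits off. Otherwise, if `pA ≠ 0`,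
choose `a = p ^ r • w` in `A` of maximal height `r` subject to `p • a ≠ 0` and write
`p • a = p ^ (m + 1) • y` with `m + 1` the height of `p • a`, so that `r < m`. Then
`z = w - p ^ (m - r) • y` has order `p ^ (r + 1)`, `a = p ^ m • y + p ^ r • z`, and by maximality of
`r` the bipicket on `y` and `z` splits off. If `pA = 0`, an element of order `p` in `A`, or in `B`
when `A = 0`, yields a picket `P_1^m` or `P_0^m`.

Summands are recognised by homomorphisms to `ZMod n`: an element of order `n` in a group killed by
`n` can be sent to `1`, as the divisible group `ℝ / ℤ` is injective and its `n`-torsion is `ZMod n`.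
-/

section ZModHom

variable {B : Type*} [AddCommGroup B] {n : ℕ}

/-- The homomorphism from `ZMod n` sending `1` to a given element `z` killed by `n`. It serves as
the inclusion of a cyclic direct summand. -/
def zmodMultiplesHom (z : B) (hz : n • z = 0) : ZMod n →+ B :=
  ZMod.lift n ⟨zmultiplesHom B z, by simpa using hz⟩

theorem zmodMultiplesHom_one (z : B) (hz : n • z = 0) : zmodMultiplesHom z hz 1 = z := by
  simpa [zmodMultiplesHom] using ZMod.lift_coe n ⟨zmultiplesHom B z, by simpa using hz⟩ 1

theorem zmodMultiplesHom_injective {z : B} (hz : addOrderOf z = n) :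
    Function.Injective (zmodMultiplesHom z (addOrderOf_dvd_iff_nsmul_eq_zero.1 hz.dvd)) :=
  (ZMod.lift_injective _).2 fun k hk => by
    rwa [ZMod.intCast_zmod_eq_zero_iff_dvd, ← hz, addOrderOf_dvd_iff_zsmul_eq_zero]

theorem zmodHom_ext {f g : ZMod n →+ B} (h : f 1 = g 1) : f = g := by
  ext x
  obtain ⟨k, rfl⟩ := ZMod.intCast_surjective x
  rw [← zsmul_one, map_zsmul, map_zsmul, h]

theorem mem_range_toAddCircle_of_nsmul_eq_zero [NeZero n] {u : UnitAddCircle} (hu : n • u = 0) :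
    u ∈ (ZMod.toAddCircle (N := n)).range := by
  obtain ⟨k, -, rfl⟩ := (AddCircle.nsmul_eq_zero_iff (NeZero.pos n)).1 hu
  exact ⟨k, by rw [ZMod.toAddCircle_natCast, mul_one]⟩

theorem exists_zmodHom_apply_eq_one [NeZero n] (hB : ∀ b : B, n • b = 0) {z : B}
    (hz : addOrderOf z = n) : ∃ f : B →+ ZMod n, f z = 1 := by
  obtain ⟨χ, hχ⟩ := (Module.Baer.of_divisible UnitAddCircle).extension_property_addMonoidHom
    _ (zmodMultiplesHom_injective hz) ZMod.toAddCircle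
  have χ_z : χ z = ZMod.toAddCircle (1 : ZMod n) := by
    rw [← hχ, AddMonoidHom.comp_apply, zmodMultiplesHom_one]
  have χ_mem_range (b : B) : χ b ∈ (ZMod.toAddCircle (N := n)).range :=
    mem_range_toAddCircle_of_nsmul_eq_zero (by rw [← map_nsmul, hB, map_zero])
  let toRange := AddMonoidHom.ofInjective (ZMod.toAddCircle_injective n)
  exact ⟨toRange.symm.toAddMonoidHom.comp (χ.codRestrict _ χ_mem_range),
    toRange.symm_apply_eq.2 (Subtype.ext χ_z)⟩

theorem exists_zmodHom_of_pow_nsmul_notMem {p : ℕ} [Fact p.Prime] {m : ℕ} {S : AddSubgroup B}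
    (hS : ∀ b : B, p ^ (m + 1) • b ∈ S) {z : B} (hz : p ^ m • z ∉ S) :
    ∃ f : B →+ ZMod (p ^ (m + 1)), f z = 1 ∧ ∀ x ∈ S, f x = 0 := by
  have nsmul_mk_eq_zero (k : ℕ) (b : B) : k • (b : B ⧸ S) = 0 ↔ k • b ∈ S :=
    QuotientAddGroup.eq_zero_iff _
  obtain ⟨f, hf⟩ := exists_zmodHom_apply_eq_one
    (fun q => QuotientAddGroup.induction_on q fun b => (nsmul_mk_eq_zero _ b).2 (hS b))
    (addOrderOf_eq_prime_pow ((nsmul_mk_eq_zero _ z).not.2 hz) ((nsmul_mk_eq_zero _ z).2 (hS z)))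
  refine ⟨f.comp (QuotientAddGroup.mk' S), hf, fun x hx => ?_⟩
  rw [AddMonoidHom.comp_apply, QuotientAddGroup.mk'_apply, (QuotientAddGroup.eq_zero_iff x).2 hx,
    map_zero]

end ZModHom

section PairIso

variable {B C D E : Type*} [AddCommGroup B] [AddCommGroup C] [AddCommGroup D] [AddCommGroup E]

/-- Isomorphism of the pairs `(A ⊆ B)` and `(A' ⊆ C)`. Only the subgroups are mentioned, since
their types determine the ambient groups. -/
def PairIso (A : AddSubgroup B) (A' : AddSubgroup C) : Prop :=
  ∃ e : B ≃+ C, A.map e.toAddMonoidHom = A'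

theorem pairIso_of_mem_iff {A : AddSubgroup B} {A' : AddSubgroup C} (e : B ≃+ C)
    (h : ∀ b, e b ∈ A' ↔ b ∈ A) : PairIso A A' :=
  ⟨e, by ext c; rw [AddSubgroup.mem_map_equiv, ← h, e.apply_symm_apply]⟩

theorem PairIso.exists_mem_iff {A : AddSubgroup B} {A' : AddSubgroup C} (h : PairIso A A') :
    ∃ e : B ≃+ C, ∀ b, e b ∈ A' ↔ b ∈ A := by
  obtain ⟨e, rfl⟩ := h
  exact ⟨e, fun b => by rw [AddSubgroup.mem_map_equiv, e.symm_apply_apply]⟩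

theorem PairIso.refl (A : AddSubgroup B) : PairIso A A :=
  pairIso_of_mem_iff (AddEquiv.refl B) fun _ => Iff.rfl

theorem PairIso.symm {A : AddSubgroup B} {A' : AddSubgroup C} (h : PairIso A A') :
    PairIso A' A := by
  obtain ⟨e, he⟩ := h.exists_mem_iff
  exact pairIso_of_mem_iff e.symm fun c => by rw [← he, e.apply_symm_apply]

theorem PairIso.trans {A : AddSubgroup B} {A' : AddSubgroup C} {A'' : AddSubgroup D}
    (h : PairIso A A') (h' : PairIso A' A'') : PairIso A A'' := by
  obtain ⟨e, he⟩ := h.exists_mem_iff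
  obtain ⟨e', he'⟩ := h'.exists_mem_iff
  exact pairIso_of_mem_iff (e.trans e') fun b => (he' (e b)).trans (he b)

theorem PairIso.prod {A : AddSubgroup B} {A' : AddSubgroup C} {Q : AddSubgroup D}
    {Q' : AddSubgroup E} (h : PairIso A A') (h' : PairIso Q Q') :
    PairIso (A.prod Q) (A'.prod Q') := by
  obtain ⟨e, he⟩ := h.exists_mem_iff
  obtain ⟨e', he'⟩ := h'.exists_mem_iff
  exact pairIso_of_mem_iff (e.prodCongr e') fun b => and_congr (he b.1) (he' b.2)

theorem pairIso_prod_comm (A : AddSubgroup B) (A' : AddSubgroup C) :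
    PairIso (A.prod A') (A'.prod A) :=
  pairIso_of_mem_iff AddEquiv.prodComm fun _ => and_comm

theorem pairIso_prod_assoc (A : AddSubgroup B) (A' : AddSubgroup C) (A'' : AddSubgroup D) :
    PairIso ((A.prod A').prod A'') (A.prod (A'.prod A'')) :=
  pairIso_of_mem_iff AddEquiv.prodAssoc fun _ => and_assoc.symm

theorem pairIso_prod_left_comm (A : AddSubgroup B) (A' : AddSubgroup C) (A'' : AddSubgroup D) :
    PairIso (A.prod (A'.prod A'')) (A'.prod (A.prod A'')) :=
  (pairIso_prod_assoc _ _ _).symm.trans <|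
    ((pairIso_prod_comm _ _).prod (.refl _)).trans (pairIso_prod_assoc _ _ _)

theorem pairIso_pi_fin_succ {n : ℕ} {G : Fin (n + 1) → Type*} [∀ i, AddCommGroup (G i)]
    (A : ∀ i, AddSubgroup (G i)) :
    PairIso ((A 0).prod (AddSubgroup.pi Set.univ fun i : Fin n => A i.succ))
      (AddSubgroup.pi Set.univ A) :=
  pairIso_of_mem_iff (Fin.consLinearEquiv ℤ G).toAddEquiv fun b => by
    simp only [AddSubgroup.mem_pi, Set.mem_univ, true_imp_iff, Fin.forall_fin_succ,
      AddSubgroup.mem_prod]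
    rfl

end PairIso

section SplitsOff

variable {B P : Type*} [AddCommGroup B] [AddCommGroup P]

/-- The pair `(Q ⊆ P)` is a nonzero direct summand of the pair `(A ⊆ B)`: up to isomorphism
`(A ⊆ B)` is the direct sum of `(Q ⊆ P)` and the pair induced on a proper subgroup of `B`. -/
def SplitsOff (A : AddSubgroup B) (Q : AddSubgroup P) : Prop :=
  ∃ D : AddSubgroup B, D ≠ ⊤ ∧ PairIso A (Q.prod (A.addSubgroupOf D))

/-- The decomposition of the source of a split surjection `f`. -/
def equivProdKer (f : B →+ P) (s : P →+ B) (hfs : f.comp s = AddMonoidHom.id P) :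
    B ≃+ P × f.ker where
  toFun b := (f b, ⟨b - s (f b), by
    rw [AddMonoidHom.mem_ker, map_sub, ← AddMonoidHom.comp_apply, hfs, AddMonoidHom.id_apply,
      sub_self]⟩)
  invFun x := s x.1 + x.2
  left_inv b := add_sub_cancel _ _
  right_inv x := by
    have hfx : f (s x.1 + x.2) = x.1 := by
      rw [map_add, ← AddMonoidHom.comp_apply, hfs, x.2.2, add_zero, AddMonoidHom.id_apply]
    refine Prod.ext hfx (Subtype.ext ?_)
    change s x.1 + x.2 - s (f (s x.1 + x.2)) = x.2
    rw [hfx, add_sub_cancel_left]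
  map_add' b c := Prod.ext (map_add f b c) (Subtype.ext (by
    simp only [map_add, Prod.mk_add_mk, AddMemClass.mk_add_mk]; abel))

theorem splitsOff_of_retraction [Nontrivial P] {A : AddSubgroup B} {Q : AddSubgroup P}
    (f : B →+ P) (s : P →+ B) (hfs : f.comp s = AddMonoidHom.id P)
    (hs : Q ≤ A.comap s) (hf : A ≤ Q.comap f) : SplitsOff A Q := by
  refine ⟨f.ker, fun hker => ?_, pairIso_of_mem_iff (equivProdKer f s hfs) fun b => ?_⟩
  · obtain ⟨q, hq⟩ := exists_ne (0 : P)
    have hsq : s q ∈ f.ker := hker ▸ AddSubgroup.mem_top (s q)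
    exact hq ((DFunLike.congr_fun hfs q).symm.trans hsq)
  · change f b ∈ Q ∧ b - s (f b) ∈ A ↔ b ∈ A
    refine ⟨fun h => ?_, fun hb => ⟨hf hb, A.sub_mem hb (hs (hf hb))⟩⟩
    rw [← sub_add_cancel b (s (f b))]
    exact A.add_mem h.2 (hs h.1)

end SplitsOff

section Picket

variable {p : ℕ}

/-- The subgroup of the picket `P_ℓ^m`. -/
def picket (p ℓ m : ℕ) : AddSubgroup (ZMod (p ^ m)) :=
  AddSubgroup.zmultiples ((p : ZMod (p ^ m)) ^ (m - ℓ))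

/-- The subgroup of the bipicket `T_2^{m,r}`. -/
def bipicket (p m r : ℕ) : AddSubgroup (ZMod (p ^ m) × ZMod (p ^ r)) :=
  AddSubgroup.zmultiples ((p : ZMod (p ^ m)) ^ (m - 2), (p : ZMod (p ^ r)) ^ (r - 1))

/-- The pair `(A ⊆ B)` is isomorphic to a finite direct sum of pickets `P_ℓ^m` with `ℓ ≤ min 2 m`
and bipickets `T_2^{m,r}` with `1 ≤ r ≤ m - 2`. -/
def IsPicketBipicketSum (p : ℕ) {B : Type*} [AddCommGroup B] (A : AddSubgroup B) : Prop :=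
  ∃ (n₁ n₂ : ℕ) (ℓ m₁ : Fin n₁ → ℕ) (m₂ r : Fin n₂ → ℕ),
    (∀ i, ℓ i ≤ min 2 (m₁ i)) ∧ (∀ j, 1 ≤ r j ∧ r j + 2 ≤ m₂ j) ∧
    PairIso A ((AddSubgroup.pi Set.univ fun i => picket p (ℓ i) (m₁ i)).prod
      (AddSubgroup.pi Set.univ fun j => bipicket p (m₂ j) (r j)))

variable {B C : Type*} [AddCommGroup B] [AddCommGroup C] {A : AddSubgroup B}

theorem isPicketBipicketSum_of_subsingleton [Subsingleton B] : IsPicketBipicketSum p A := by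
  refine ⟨0, 0, Fin.elim0, Fin.elim0, Fin.elim0, Fin.elim0, fun i => i.elim0, fun j => j.elim0,
    pairIso_of_mem_iff ⟨⟨0, 0, fun _ => Subsingleton.elim _ _, fun _ => Subsingleton.elim _ _⟩,
      fun _ _ => Subsingleton.elim _ _⟩ fun b => iff_of_true ?_ ?_⟩
  · exact ⟨fun i => i.elim0, fun j => j.elim0⟩
  · rw [Subsingleton.elim b 0]
    exact A.zero_mem

theorem IsPicketBipicketSum.of_pairIso_picket_prod {A' : AddSubgroup C}
    (h : IsPicketBipicketSum p A') {ℓ m : ℕ} (hℓ : ℓ ≤ min 2 m)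
    (hA : PairIso A ((picket p ℓ m).prod A')) : IsPicketBipicketSum p A := by
  obtain ⟨n₁, n₂, ℓ', m₁, m₂, r, hℓ', hr, hA'⟩ := h
  let ℓ₁ : Fin (n₁ + 1) → ℕ := Fin.cons ℓ ℓ'
  let m₁' : Fin (n₁ + 1) → ℕ := Fin.cons m m₁
  refine ⟨n₁ + 1, n₂, ℓ₁, m₁', m₂, r, Fin.forall_fin_succ.2 ⟨hℓ, hℓ'⟩, hr, ?_⟩
  exact (hA.trans ((PairIso.refl _).prod hA')).trans <| (pairIso_prod_assoc _ _ _).symm.trans <|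
    (pairIso_pi_fin_succ fun i => picket p (ℓ₁ i) (m₁' i)).prod (.refl _)

theorem IsPicketBipicketSum.of_pairIso_bipicket_prod {A' : AddSubgroup C}
    (h : IsPicketBipicketSum p A') {m r : ℕ} (hr : 1 ≤ r ∧ r + 2 ≤ m)
    (hA : PairIso A ((bipicket p m r).prod A')) : IsPicketBipicketSum p A := by
  obtain ⟨n₁, n₂, ℓ, m₁, m₂, r', hℓ, hr', hA'⟩ := h
  let m₂' : Fin (n₂ + 1) → ℕ := Fin.cons m m₂
  let r₂ : Fin (n₂ + 1) → ℕ := Fin.cons r r'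
  refine ⟨n₁, n₂ + 1, ℓ, m₁, m₂', r₂, hℓ, Fin.forall_fin_succ.2 ⟨hr, hr'⟩, ?_⟩
  exact (hA.trans ((PairIso.refl _).prod hA')).trans <| (pairIso_prod_left_comm _ _ _).trans <|
    (PairIso.refl _).prod (pairIso_pi_fin_succ fun j => bipicket p (m₂' j) (r₂ j))

theorem mem_picket_of_pow_nsmul_eq_zero [NeZero p] {ℓ m : ℕ} (hℓ : ℓ ≤ m) {c : ZMod (p ^ m)}
    (hc : p ^ ℓ • c = 0) : c ∈ picket p ℓ m := by
  obtain ⟨j, rfl⟩ := ZMod.intCast_surjective c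
  have dvd : (p : ℤ) ^ ℓ * p ^ (m - ℓ) ∣ p ^ ℓ * j := by
    rw [← pow_add, Nat.add_sub_cancel' hℓ]
    have := (ZMod.intCast_zmod_eq_zero_iff_dvd (p ^ ℓ * j) (p ^ m)).1 (by
      simpa [nsmul_eq_mul] using hc)
    exact_mod_cast this
  obtain ⟨k, rfl⟩ := Int.dvd_of_mul_dvd_mul_left
    (pow_ne_zero ℓ (Nat.cast_ne_zero.2 (NeZero.ne p))) dvd
  exact AddSubgroup.mem_zmultiples_iff.2 ⟨k, by
    rw [zsmul_eq_mul]; push_cast; rw [mul_comm]⟩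

end Picket

section Splitting

variable {B : Type*} [AddCommGroup B] {p : ℕ}

/-- The subgroup `nB` of multiples of `n`. An element has height at least `k` if it lies in
`nsmulRange B (p ^ k)`. -/
abbrev nsmulRange (B : Type*) [AddCommGroup B] (n : ℕ) : AddSubgroup B :=
  (nsmulAddMonoidHom n : B →+ B).range

theorem pow_nsmul_mem_nsmulRange {k m : ℕ} (hkm : k ≤ m) (b : B) :
    p ^ m • b ∈ nsmulRange B (p ^ k) :=
  ⟨p ^ (m - k) • b, by
    rw [nsmulAddMonoidHom_apply, ← mul_smul, ← pow_add, Nat.add_sub_cancel' hkm]⟩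

theorem nsmulRange_pow_antitone : Antitone fun k => nsmulRange B (p ^ k) := by
  rintro k m hkm _ ⟨b, rfl⟩
  exact pow_nsmul_mem_nsmulRange hkm b

theorem zsmul_mem_nsmulRange_of_intCast_eq_zero {n : ℕ} {k : ℤ} (hk : (k : ZMod n) = 0) (b : B) :
    k • b ∈ nsmulRange B n := by
  obtain ⟨c, rfl⟩ := (ZMod.intCast_zmod_eq_zero_iff_dvd k n).1 hk
  exact ⟨c • b, by rw [nsmulAddMonoidHom_apply, mul_smul, natCast_zsmul]⟩

theorem zsmul_eq_zero_of_intCast_eq_zero {n : ℕ} {k : ℤ} {z : B} (hz : n • z = 0)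
    (hk : (k : ZMod n) = 0) : k • z = 0 := by
  obtain ⟨c, rfl⟩ := (ZMod.intCast_zmod_eq_zero_iff_dvd k n).1 hk
  rw [mul_comm, mul_smul, natCast_zsmul, hz, smul_zero]

theorem map_eq_zero_of_mem_nsmulRange {n : ℕ} (f : B →+ ZMod n) {x : B}
    (hx : x ∈ nsmulRange B n) : f x = 0 := by
  obtain ⟨b, rfl⟩ := hx
  rw [nsmulAddMonoidHom_apply, map_nsmul, nsmul_eq_mul, ZMod.natCast_self, zero_mul]

theorem zsmul_mem_nsmulRange_of_map_add_eq_zero {d n : ℕ} (hdn : d ∣ n) {f : B →+ ZMod n}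
    {y u : B} (hfy : f y = 1) (hu : u ∈ nsmulRange B d) {k : ℤ} (hk : f (k • y + u) = 0) :
    k • y ∈ nsmulRange B d := by
  let f' := (ZMod.castHom hdn (ZMod d)).toAddMonoidHom.comp f
  have hf'y : f' y = 1 := by
    change ZMod.castHom hdn (ZMod d) (f y) = 1
    rw [hfy, map_one]
  have hf'k : f' (k • y + u) = 0 := by simp [f', hk]
  refine zsmul_mem_nsmulRange_of_intCast_eq_zero ?_ y
  rwa [map_add, map_zsmul, hf'y, map_eq_zero_of_mem_nsmulRange f' hu, add_zero, zsmul_one] at hf'k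

theorem exists_pow_nsmul_eq_notMem_nsmulRange {N : ℕ} (hN : ∀ b : B, p ^ N • b = 0) {x : B}
    (hx : x ≠ 0) : ∃ (k : ℕ) (y : B), p ^ k • y = x ∧ x ∉ nsmulRange B (p ^ (k + 1)) := by
  obtain ⟨k, hk, hk'⟩ := Nat.exists_not_and_succ_of_not_zero_of_exists
    (p := fun k => x ∉ nsmulRange B (p ^ k)) (fun h => h ⟨x, by simp⟩)
    ⟨N, by rintro ⟨b, rfl⟩; exact hx (hN b)⟩
  obtain ⟨y, hy⟩ := not_not.1 hk
  exact ⟨k, y, hy, hk'⟩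

theorem exists_ne_zero_prime_nsmul_eq_zero [Nontrivial B] {N : ℕ} (hN : ∀ b : B, p ^ N • b = 0) :
    ∃ x : B, x ≠ 0 ∧ p • x = 0 := by
  obtain ⟨b, hb⟩ := exists_ne (0 : B)
  obtain ⟨k, hk, hk'⟩ := Nat.exists_not_and_succ_of_not_zero_of_exists
    (p := fun k => p ^ k • b = 0) (by simpa using hb) ⟨N, hN b⟩
  exact ⟨p ^ k • b, hk, by rwa [← mul_smul, ← pow_succ']⟩

variable [Fact p.Prime] {A : AddSubgroup B}

theorem nontrivial_zmod_prime_pow_succ (m : ℕ) : Nontrivial (ZMod (p ^ (m + 1))) :=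
  ZMod.nontrivial_iff.2 (Nat.one_lt_pow m.succ_ne_zero (Fact.out : p.Prime).one_lt).ne'

theorem splitsOff_picket {ℓ m : ℕ} (hℓ : ℓ ≤ m + 1) (hA : ∀ a ∈ A, p ^ ℓ • a = 0) {y : B}
    (hyA : p ^ (m + 1 - ℓ) • y ∈ A) (hy : p ^ (m + 1) • y = 0)
    (hy_height : p ^ m • y ∉ nsmulRange B (p ^ (m + 1))) : SplitsOff A (picket p ℓ (m + 1)) := by
  obtain ⟨f, hfy, -⟩ :=
    exists_zmodHom_of_pow_nsmul_notMem (pow_nsmul_mem_nsmulRange le_rfl) hy_height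
  have := nontrivial_zmod_prime_pow_succ (p := p) m
  refine splitsOff_of_retraction f (zmodMultiplesHom y hy) (zmodHom_ext ?_) ?_ fun a ha => ?_
  · rw [AddMonoidHom.comp_apply, zmodMultiplesHom_one, hfy, AddMonoidHom.id_apply]
  · refine AddSubgroup.zmultiples_le_of_mem ?_
    rwa [AddSubgroup.mem_comap, ← Nat.cast_pow, ← nsmul_one, map_nsmul, zmodMultiplesHom_one]
  · exact mem_picket_of_pow_nsmul_eq_zero hℓ (by rw [← map_nsmul, hA a ha, map_zero])

theorem splitsOff_bipicket_of_dual (hA : ∀ a ∈ A, p ^ 2 • a = 0) {m r : ℕ} {y z : B}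
    (hy : p ^ (m + 2) • y = 0) (hz : p ^ (r + 1) • z = 0)
    {f : B →+ ZMod (p ^ (m + 2))} (hfy : f y = 1) (hfz : f z = 0)
    {g : B →+ ZMod (p ^ (r + 1))} (hgy : g y = 0) (hgz : g z = 1)
    (hyzA : p ^ m • y + p ^ r • z ∈ A) (hfg : ∀ a ∈ A, f a = 0 → g a = 0) :
    SplitsOff A (bipicket p (m + 2) (r + 1)) := by
  have := nontrivial_zmod_prime_pow_succ (p := p) r
  refine splitsOff_of_retraction (f.prod g)
    ((zmodMultiplesHom y hy).coprod (zmodMultiplesHom z hz)) ?_ ?_ fun a ha => ?_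
  · have hfg_y : (f.prod g).comp (zmodMultiplesHom y hy) = AddMonoidHom.inl _ _ :=
      zmodHom_ext (by simp [zmodMultiplesHom_one, hfy, hgy])
    have hfg_z : (f.prod g).comp (zmodMultiplesHom z hz) = AddMonoidHom.inr _ _ :=
      zmodHom_ext (by simp [zmodMultiplesHom_one, hfz, hgz])
    rw [AddMonoidHom.comp_coprod, hfg_y, hfg_z, AddMonoidHom.coprod_inl_inr]
  · refine AddSubgroup.zmultiples_le_of_mem ?_
    simpa only [AddSubgroup.mem_comap, AddMonoidHom.coprod_apply, Nat.add_sub_cancel,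
      ← Nat.cast_pow, ← nsmul_one (p ^ _), map_nsmul, zmodMultiplesHom_one] using hyzA
  · obtain ⟨k, hk⟩ := AddSubgroup.mem_zmultiples_iff.1 <|
      mem_picket_of_pow_nsmul_eq_zero (Nat.le_add_left 2 m)
        (show p ^ 2 • f a = 0 by rw [← map_nsmul, hA a ha, map_zero])
    rw [Nat.add_sub_cancel] at hk
    have hga := hfg (a - k • (p ^ m • y + p ^ r • z)) (A.sub_mem ha (A.zsmul_mem hyzA k)) (by
      simp [hfy, hfz, ← hk])
    refine AddSubgroup.mem_zmultiples_iff.2 ⟨k, Prod.ext hk ?_⟩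
    exact (sub_eq_zero.1 (by simpa [hgy, hgz] using hga)).symm

theorem exists_zmodHom_eq_one_and_eq_zero {m r : ℕ} (hrm : r < m) {y z : B}
    (hz : p ^ (r + 1) • z = 0) (hz_height : p ^ r • z ∉ nsmulRange B (p ^ (r + 1)))
    (hy_height : p ^ m • y ∉ nsmulRange B (p ^ (m + 1))) :
    ∃ f : B →+ ZMod (p ^ (m + 1)), f y = 1 ∧ f z = 0 := by
  obtain ⟨g, hgz, hg⟩ :=
    exists_zmodHom_of_pow_nsmul_notMem (pow_nsmul_mem_nsmulRange le_rfl) hz_height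
  obtain ⟨f, hfy, hf⟩ := exists_zmodHom_of_pow_nsmul_notMem
    (S := AddSubgroup.zmultiples z ⊔ nsmulRange B (p ^ (m + 1))) (z := y)
    (fun b => AddSubgroup.mem_sup_right (pow_nsmul_mem_nsmulRange le_rfl b)) fun hy => by
      obtain ⟨_, hkz, x, hx, hkx⟩ := AddSubgroup.mem_sup.1 hy
      obtain ⟨k, rfl⟩ := AddSubgroup.mem_zmultiples_iff.1 hkz
      have hk : (k : ZMod (p ^ (r + 1))) = 0 := by
        have hgx : g x = 0 := hg x (nsmulRange_pow_antitone (by lia) hx)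
        simpa [hgz, hgx, hg _ (pow_nsmul_mem_nsmulRange hrm y)] using congrArg g hkx
      rw [← hkx, zsmul_eq_zero_of_intCast_eq_zero hz hk, zero_add] at hy_height
      exact hy_height hx
  exact ⟨f, hfy, hf z (AddSubgroup.mem_sup_left (AddSubgroup.mem_zmultiples z))⟩

theorem pow_nsmul_notMem_inf_ker_sup {m r : ℕ} (hrm : r < m) {y z : B}
    (hyzA : p ^ m • y + p ^ r • z ∈ A)
    (hmax : ∀ a ∈ A, a ∈ nsmulRange B (p ^ (r + 1)) → p • a = 0)
    {f : B →+ ZMod (p ^ (m + 2))} (hfy : f y = 1) (hfz : f z = 0) :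
    p ^ r • z ∉ (A ⊓ f.ker) ⊔ (AddSubgroup.zmultiples y ⊔ nsmulRange B (p ^ (r + 1))) := by
  intro hz
  obtain ⟨x, ⟨hxA, hx_ker⟩, _, hyu, hz_eq⟩ := AddSubgroup.mem_sup.1 hz
  obtain ⟨_, hky, u, hu, rfl⟩ := AddSubgroup.mem_sup.1 hyu
  obtain ⟨k, rfl⟩ := AddSubgroup.mem_zmultiples_iff.1 hky
  have hfx : f x = 0 := hx_ker
  have hky : k • y ∈ nsmulRange B (p ^ (r + 1)) :=
    zsmul_mem_nsmulRange_of_map_add_eq_zero (pow_dvd_pow p (by lia)) hfy hu (by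
      simpa [hfx, hfz] using congrArg f hz_eq)
  have h_sub : p ^ m • y + p ^ r • z - x = p ^ m • y + (k • y + u) := by rw [← hz_eq]; abel
  have h_smul := hmax _ (A.sub_mem hyzA hxA) (h_sub ▸
    add_mem (pow_nsmul_mem_nsmulRange hrm y) (add_mem hky hu))
  have h_cast : ((p ^ (m + 1) : ℕ) : ZMod (p ^ (m + 2))) = 0 := by
    simpa [hfy, hfz, hfx, pow_succ'] using congrArg f h_smul
  rw [ZMod.natCast_eq_zero_iff, Nat.pow_dvd_pow_iff_le_right (Fact.out : p.Prime).one_lt] at h_cast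
  lia

theorem exists_zmodHom_vanishing_on_inf_ker {m r : ℕ} (hrm : r < m) {y z : B}
    (hyzA : p ^ m • y + p ^ r • z ∈ A)
    (hmax : ∀ a ∈ A, a ∈ nsmulRange B (p ^ (r + 1)) → p • a = 0)
    {f : B →+ ZMod (p ^ (m + 2))} (hfy : f y = 1) (hfz : f z = 0) :
    ∃ g : B →+ ZMod (p ^ (r + 1)), g y = 0 ∧ g z = 1 ∧ ∀ a ∈ A, f a = 0 → g a = 0 := by
  obtain ⟨g, hgz, hg⟩ := exists_zmodHom_of_pow_nsmul_notMem
    (fun b => AddSubgroup.mem_sup_right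
      (AddSubgroup.mem_sup_right (pow_nsmul_mem_nsmulRange le_rfl b)))
    (pow_nsmul_notMem_inf_ker_sup hrm hyzA hmax hfy hfz)
  exact ⟨g, hg y (AddSubgroup.mem_sup_right
    (AddSubgroup.mem_sup_left (AddSubgroup.mem_zmultiples y))), hgz,
    fun a ha hfa => hg a (AddSubgroup.mem_sup_left ⟨ha, hfa⟩)⟩

theorem splitsOff_bipicket (hA : ∀ a ∈ A, p ^ 2 • a = 0) {m r : ℕ} (hrm : r < m) {y w : B}
    (hwA : p ^ r • w ∈ A) (hmax : ∀ a ∈ A, a ∈ nsmulRange B (p ^ (r + 1)) → p • a = 0)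
    (hwy : p • p ^ r • w = p ^ (m + 1) • y)
    (hy_height : p ^ (m + 1) • y ∉ nsmulRange B (p ^ (m + 2))) :
    SplitsOff A (bipicket p (m + 2) (r + 1)) := by
  have hy : p ^ (m + 2) • y = 0 := by
    rw [pow_succ', mul_smul, ← hwy, ← hA _ hwA, ← mul_smul, ← sq]
  obtain ⟨z, hz_smul, hz⟩ : ∃ z, p ^ r • z = p ^ r • w - p ^ m • y ∧ p ^ (r + 1) • z = 0 := by
    have hz_smul : p ^ r • (w - p ^ (m - r) • y) = p ^ r • w - p ^ m • y := by
      rw [smul_sub, ← mul_smul, ← pow_add, Nat.add_sub_cancel' hrm.le]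
    refine ⟨_, hz_smul, ?_⟩
    rw [pow_succ', mul_smul, hz_smul, smul_sub, hwy, ← mul_smul, ← pow_succ', sub_self]
  have hwz : p ^ m • y + p ^ r • z = p ^ r • w := by rw [hz_smul, add_sub_cancel]
  have hz_height : p ^ r • z ∉ nsmulRange B (p ^ (r + 1)) := fun h => by
    have hw := hmax _ hwA (hwz ▸ add_mem (pow_nsmul_mem_nsmulRange hrm y) h)
    exact hy_height (by rw [← hwy, hw]; exact zero_mem _)
  obtain ⟨f, hfy, hfz⟩ :=
    exists_zmodHom_eq_one_and_eq_zero (hrm.trans m.lt_succ_self) hz hz_height hy_height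
  have hyzA : p ^ m • y + p ^ r • z ∈ A := hwz ▸ hwA
  obtain ⟨g, hgy, hgz, hfg⟩ := exists_zmodHom_vanishing_on_inf_ker hrm hyzA hmax hfy hfz
  exact splitsOff_bipicket_of_dual hA hy hz hfy hfz hgy hgz hyzA hfg

theorem exists_splitsOff_bipicket {N : ℕ} (hN : ∀ b : B, p ^ N • b = 0)
    (hA : ∀ a ∈ A, p ^ 2 • a = 0) {a : B} (ha : a ∈ A) (hpa : p • a ≠ 0)
    (hgap : ∀ (k : ℕ) (y : B), p ^ k • y ∈ A → p ^ (k + 1) • y ∈ nsmulRange B (p ^ (k + 2))) :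
    ∃ m r, r < m ∧ SplitsOff A (bipicket p (m + 2) (r + 1)) := by
  obtain ⟨r, hr, hmax⟩ := Nat.exists_not_and_succ_of_not_zero_of_exists
    (p := fun k => ∀ x ∈ A, x ∈ nsmulRange B (p ^ k) → p • x = 0)
    (fun h => hpa (h a ha ⟨a, by simp⟩)) ⟨N, by rintro x - ⟨b, rfl⟩; simp [hN]⟩
  push Not at hr
  obtain ⟨_, hwA, ⟨w, rfl⟩, hpw⟩ := hr
  obtain ⟨k, y, hy, hk⟩ := exists_pow_nsmul_eq_notMem_nsmulRange hN hpw
  have hrk : r + 2 ≤ k := by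
    by_contra! hkr
    refine hk (nsmulRange_pow_antitone (show k + 1 ≤ r + 2 by lia) ?_)
    simpa only [nsmulAddMonoidHom_apply, pow_succ', mul_smul] using hgap r w hwA
  obtain ⟨m, rfl⟩ := Nat.exists_eq_add_of_le' (Nat.one_le_of_lt hrk)
  exact ⟨m, r, by lia, splitsOff_bipicket hA (by lia) hwA hmax hy.symm (hy ▸ hk)⟩

theorem exists_splitsOff_picket {N : ℕ} (hN : ∀ b : B, p ^ N • b = 0) {ℓ : ℕ} (hℓ : ℓ ≤ 1)
    (hA : ∀ a ∈ A, p ^ ℓ • a = 0) {x : B} (hx : x ≠ 0) (hpx : p • x = 0)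
    (hxA : p ^ (1 - ℓ) • x ∈ A) : ∃ m, SplitsOff A (picket p ℓ (m + 1)) := by
  obtain ⟨m, y, rfl, hy_height⟩ := exists_pow_nsmul_eq_notMem_nsmulRange hN hx
  refine ⟨m, splitsOff_picket (by lia) hA ?_ ?_ hy_height⟩
  · rwa [Nat.add_sub_assoc hℓ, add_comm, pow_add, mul_smul]
  · rwa [pow_succ', mul_smul]

theorem exists_splitsOff [Nontrivial B] {N : ℕ} (hN : ∀ b : B, p ^ N • b = 0)
    (hA : ∀ a ∈ A, p ^ 2 • a = 0) :
    (∃ ℓ m, ℓ ≤ min 2 m ∧ SplitsOff A (picket p ℓ m)) ∨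
      ∃ m r, (1 ≤ r ∧ r + 2 ≤ m) ∧ SplitsOff A (bipicket p m r) := by
  by_cases hgap : ∀ (k : ℕ) (y : B), p ^ k • y ∈ A → p ^ (k + 1) • y ∈ nsmulRange B (p ^ (k + 2))
  · by_cases hpA : ∀ a ∈ A, p • a = 0
    · left
      by_cases hA_zero : ∀ a ∈ A, a = 0
      · obtain ⟨x, hx, hpx⟩ := exists_ne_zero_prime_nsmul_eq_zero hN
        obtain ⟨m, hm⟩ := exists_splitsOff_picket hN zero_le_one (by simpa using hA_zero) hx hpx
          (by simp [hpx])
        exact ⟨0, m + 1, Nat.zero_le _, hm⟩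
      · push Not at hA_zero
        obtain ⟨a, ha, ha_ne⟩ := hA_zero
        obtain ⟨m, hm⟩ := exists_splitsOff_picket hN le_rfl (by simpa using hpA) ha_ne (hpA a ha)
          (by simpa using ha)
        exact ⟨1, m + 1, by lia, hm⟩
    · push Not at hpA
      obtain ⟨a, ha, hpa⟩ := hpA
      obtain ⟨m, r, hrm, h⟩ := exists_splitsOff_bipicket hN hA ha hpa hgap
      exact .inr ⟨m + 2, r + 1, by lia, h⟩
  · push Not at hgap
    obtain ⟨k, y, hyA, hy_height⟩ := hgap
    have hy : p ^ (k + 2) • y = 0 := by rw [add_comm, pow_add, mul_smul, hA _ hyA]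
    exact .inl ⟨2, k + 2, by lia, splitsOff_picket (by lia) hA hyA hy hy_height⟩

end Splitting

theorem isPicketBipicketSum_of_pow_nsmul_eq_zero {B : Type*} [AddCommGroup B] [Finite B] {p : ℕ}
    [Fact p.Prime] {N : ℕ} (hN : ∀ b : B, p ^ N • b = 0) (A : AddSubgroup B)
    (hA : ∀ a ∈ A, p ^ 2 • a = 0) : IsPicketBipicketSum p A := by
  cases subsingleton_or_nontrivial B
  · exact isPicketBipicketSum_of_subsingleton
  have summand (D : AddSubgroup B) (hD : D ≠ ⊤) : IsPicketBipicketSum p (A.addSubgroupOf D) :=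
    have : Nat.card D < Nat.card B := by
      obtain ⟨x, -, hx⟩ := SetLike.exists_of_lt hD.lt_top
      exact Finite.card_subtype_lt hx
    isPicketBipicketSum_of_pow_nsmul_eq_zero (fun d => Subtype.ext (hN d)) _
      fun d hd => Subtype.ext (hA d hd)
  obtain ⟨ℓ, m, hℓ, D, hD, h⟩ | ⟨m, r, hr, D, hD, h⟩ := exists_splitsOff hN hA
  · exact (summand D hD).of_pairIso_picket_prod hℓ h
  · exact (summand D hD).of_pairIso_bipicket_prod hr h
termination_by Nat.card B

/-- Every pair `(A ⊆ B)` of finite abelian `p`-groups with `p² A = 0` is isomorphic, as a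
pair, to a finite direct sum of pickets `P_ℓ^m` (`ℓ ≤ min 2 m`) and bipickets `T_2^{m,r}`
(`1 ≤ r ≤ m - 2`).  The picket `P_ℓ^m` is the pair
`(p^{m-ℓ}(ℤ/p^m) ⊆ ℤ/p^m)` and the bipicket `T_2^{m,r}` is the pair
`(⟨(p^{m-2}, p^{r-1})⟩ ⊆ ℤ/p^m ⊕ ℤ/p^r)`. -/
theorem stmt_0 (p : ℕ) (hp : p.Prime) (B : Type) [AddCommGroup B] [Fintype B]
    (hB : ∀ b : B, ∃ n : ℕ, p ^ n • b = 0)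
    (A : AddSubgroup B) (hA : ∀ a ∈ A, p ^ 2 • a = 0) :
    ∃ (n₁ n₂ : ℕ) (ℓ m₁ : Fin n₁ → ℕ) (m₂ r : Fin n₂ → ℕ),
      (∀ i, ℓ i ≤ min 2 (m₁ i)) ∧
      (∀ j, 1 ≤ r j ∧ r j + 2 ≤ m₂ j) ∧
      ∃ e : B ≃+ ((∀ i, ZMod (p ^ m₁ i)) × (∀ j, ZMod (p ^ m₂ j) × ZMod (p ^ r j))),
        A.map e.toAddMonoidHom =
          (AddSubgroup.pi Set.univ fun i =>
              AddSubgroup.zmultiples ((p : ZMod (p ^ m₁ i)) ^ (m₁ i - ℓ i))).prod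
            (AddSubgroup.pi Set.univ fun j =>
              AddSubgroup.zmultiples
                ((p : ZMod (p ^ m₂ j)) ^ (m₂ j - 2), (p : ZMod (p ^ r j)) ^ (r j - 1))) := by
  have : Fact p.Prime := ⟨hp⟩
  choose n hn using hB
  refine isPicketBipicketSum_of_pow_nsmul_eq_zero (N := Finset.univ.sup n) (fun b => ?_) A hA
  rw [← addOrderOf_dvd_iff_nsmul_eq_zero]
  exact (addOrderOf_dvd_of_nsmul_eq_zero (hn b)).trans
    (pow_dvd_pow p (Finset.le_sup (Finset.mem_univ b)))
end

section
/- Let p be a prime and B = ℤ/p⁴ℤ × ℤ/p³ℤ × ℤ/p²ℤ. Then the number of subgroups U of B such that U is isomorphic to ℤ/p³ℤ × ℤ/p²ℤ × ℤ/pℤ and B/U is isomorphic to ℤ/p²ℤ × ℤ/pℤ equals 2p² + p − 1. -/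
/-!
Let `B` have type `(4, 3, 2)`. Since `B` has rank `3`, a subgroup `U` has rank `3` exactly when it
contains `B[p]`; comparing orders and exponents, `U` and `B ⧸ U` have the required types if and only
if `B[p] + p²B ≤ U ≤ B[p³]`, `|U| = p⁶` and `U` is neither `pB` (where `B ⧸ U` would be
elementary) nor `B[p²]` (where `U` would have exponent `p²`). The intermediate subgroups of order
`p⁶` are the subgroups of order `p²` of `H = B[p³] / (B[p] + p²B)`, which satisfies `|H| = p⁴` and
`|H[p]| = p³`. The noncyclic ones are the hyperplanes of `H[p]`, `p² + p + 1` in number; the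
`p⁴ - p³` elements of order `p²` generate `(p⁴ - p³) / φ(p²) = p²` cyclic ones. Discarding `pB`
and `B[p²]` leaves `2p² + p - 1`.
-/

open scoped Nat

section Cardinality

variable {G H : Type*} [AddGroup G] [AddGroup H]

theorem card_ker_mul_card_map (f : G →+ H) {S : AddSubgroup G} (hS : f.ker ≤ S) :
    Nat.card f.ker * Nat.card (S.map f) = Nat.card S := by
  rw [← AddSubgroup.relIndex_ker, ← AddSubgroup.relIndex_bot_left f.ker,
    AddSubgroup.relIndex_mul_relIndex _ _ _ bot_le hS, AddSubgroup.relIndex_bot_left]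

theorem card_comap_of_le_range (f : G →+ H)
    {T : AddSubgroup H} (hT : T ≤ f.range) :
    Nat.card (T.comap f) = Nat.card f.ker * Nat.card T := by
  rw [← card_ker_mul_card_map f (f.ker_le_comap T), AddSubgroup.map_comap_eq_self hT]

theorem card_comap_of_surjective {f : G →+ H} (hf : Function.Surjective f) (T : AddSubgroup H) :
    Nat.card (T.comap f) = Nat.card f.ker * Nat.card T := by
  rw [card_comap_of_le_range f (f.range_eq_top.2 hf ▸ le_top)]

theorem card_addSubgroupOf {U L : AddSubgroup G} (hUL : U ≤ L) :
    Nat.card (U.addSubgroupOf L) = Nat.card U :=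
  Nat.card_congr (AddSubgroup.addSubgroupOfEquivOfLe hUL).toEquiv

theorem card_addSubgroup_le (S : AddSubgroup G) (m : ℕ) :
    Nat.card {U : AddSubgroup G // U ≤ S ∧ Nat.card U = m} =
      Nat.card {W : AddSubgroup S // Nat.card W = m} := by
  let e : {W : AddSubgroup S // Nat.card W = m} ≃
      {U : {U : AddSubgroup G // U ≤ S} // Nat.card U.1 = m} :=
    (AddSubgroup.MapSubtype.orderIso S).toEquiv.subtypeEquiv fun W ↦ by
      change _ ↔ Nat.card (W.map S.subtype) = m
      rw [AddSubgroup.card_map_of_injective S.subtype_injective]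
  exact Nat.card_congr ((Equiv.subtypeSubtypeEquivSubtypeInter _ _).symm.trans e.symm)

theorem card_addOrderOf_eq [Finite G] (n : ℕ) :
    Nat.card {x : G // addOrderOf x = n} =
      Nat.card {W : AddSubgroup G // IsAddCyclic W ∧ Nat.card W = n} * φ n := by
  let e : {x : G // addOrderOf x = n} ≃
      Σ W : {W : AddSubgroup G // IsAddCyclic W ∧ Nat.card W = n},
        {w : W.1 // addOrderOf w = n} :=
    { toFun x := ⟨⟨.zmultiples x.1, inferInstance, by rw [Nat.card_zmultiples, x.2]⟩,
        ⟨x.1, AddSubgroup.mem_zmultiples x.1⟩, by simpa using x.2⟩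
      invFun s := ⟨s.2.1, by simpa using s.2.2⟩
      left_inv x := rfl
      right_inv := by
        rintro ⟨⟨W, hW, hWn⟩, ⟨w, hwW⟩, hw⟩
        rw [AddSubgroup.addOrderOf_mk] at hw
        obtain rfl : AddSubgroup.zmultiples w = W :=
          AddSubgroup.eq_of_le_of_card_ge (AddSubgroup.zmultiples_le_of_mem hwW)
            (by rw [Nat.card_zmultiples, hw, hWn])
        rfl }
  have card_generators (W : {W : AddSubgroup G // IsAddCyclic W ∧ Nat.card W = n}) :
      Nat.card {w : W.1 // addOrderOf w = n} = φ n := by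
    classical
    have := W.2.1
    have := Fintype.ofFinite W.1
    rw [Nat.card_eq_fintype_card, Fintype.card_subtype]
    exact IsAddCyclic.card_addOrderOf_eq_totient (by simp [← Nat.card_eq_fintype_card, W.2.2])
  have := Fintype.ofFinite {W : AddSubgroup G // IsAddCyclic W ∧ Nat.card W = n}
  simp [Nat.card_congr e, Nat.card_sigma, card_generators]

end Cardinality

theorem card_addSubgroup_between {G : Type*} [AddCommGroup G] [Finite G] {K L : AddSubgroup G}
    (hKL : K ≤ L) (m : ℕ) :
    Nat.card {U : AddSubgroup G // (K ≤ U ∧ U ≤ L) ∧ Nat.card U = Nat.card K * m} =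
      Nat.card {W : AddSubgroup (L ⧸ K.addSubgroupOf L) // Nat.card W = m} := by
  let π := QuotientAddGroup.mk' (K.addSubgroupOf L)
  have ker_π : π.ker = K.addSubgroupOf L := QuotientAddGroup.ker_mk' _
  have hπ : Function.Surjective π := QuotientAddGroup.mk'_surjective _
  let lift (W : AddSubgroup (L ⧸ K.addSubgroupOf L)) : AddSubgroup G := (W.comap π).map L.subtype
  have lift_le W : lift W ≤ L := AddSubgroup.map_subtype_le _
  have le_lift W : K ≤ lift W := by
    rw [← AddSubgroup.map_addSubgroupOf_eq_of_le hKL, ← ker_π]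
    exact AddSubgroup.map_mono (π.ker_le_comap W)
  have card_lift W : Nat.card (lift W) = Nat.card K * Nat.card W := by
    rw [AddSubgroup.card_map_of_injective L.subtype_injective, card_comap_of_surjective hπ, ker_π,
      card_addSubgroupOf hKL]
  have lift_injective : Function.Injective lift :=
    (AddSubgroup.map_injective L.subtype_injective).comp (AddSubgroup.comap_injective hπ)
  symm
  refine Nat.card_eq_of_bijective (fun W ↦ ⟨lift W, ⟨le_lift W, lift_le W⟩, by rw [card_lift, W.2]⟩)
    ⟨fun W W' h ↦ Subtype.ext (lift_injective (congrArg Subtype.val h)), ?_⟩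
  rintro ⟨U, ⟨hKU, hUL⟩, hU⟩
  have lift_map : lift ((U.addSubgroupOf L).map π) = U := by
    have : π.ker ≤ U.addSubgroupOf L := ker_π.trans_le (AddSubgroup.comap_mono hKU)
    simp only [lift, AddSubgroup.comap_map_eq_self this, AddSubgroup.map_addSubgroupOf_eq_of_le hUL]
  refine ⟨⟨(U.addSubgroupOf L).map π, ?_⟩, Subtype.ext lift_map⟩
  rw [← Nat.mul_right_inj (Nat.card_pos (α := K)).ne', ← card_lift, lift_map, hU]

theorem card_subtype_and_ne_and_ne {α : Type*} {P : α → Prop} {a b : α} (ha : P a) (hb : P b)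
    (hab : a ≠ b) : Nat.card {x // P x ∧ x ≠ a ∧ x ≠ b} = Nat.card {x // P x} - 2 := by
  have setOf_eq_sdiff : {x | P x ∧ x ≠ a ∧ x ≠ b} = {x | P x} \ {a, b} := by
    ext x
    simp
  rw [← Set.ncard_pair hab]
  exact (congrArg Set.ncard setOf_eq_sdiff).trans (Set.ncard_sdiff (Set.pair_subset ha hb))

theorem card_submodule_finrank_eq {K V : Type*} [Field K] [Finite K] [AddCommGroup V] [Module K V]
    {n : ℕ} (hV : Module.finrank K V = n + 1) :
    Nat.card {W : Submodule K V // Module.finrank K W = n} =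
      ∑ i ∈ Finset.range (n + 1), Nat.card K ^ i := by
  have : FiniteDimensional K V := FiniteDimensional.of_finrank_pos (by lia)
  let e : {W : Submodule K V // Module.finrank K W = n} ≃
      {W : Submodule K (Module.Dual K V) // Module.finrank K W = 1} :=
    (Subspace.orderIsoFiniteDimensional.toEquiv.trans OrderDual.ofDual).subtypeEquiv fun W ↦ by
      have := Subspace.finrank_add_finrank_dualAnnihilator_eq W
      change _ ↔ Module.finrank K W.dualAnnihilator = 1
      lia
  rw [Nat.card_congr (e.trans (Projectivization.equivSubmodule K (Module.Dual K V)).symm),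
    Projectivization.card_of_finrank K _ (Subspace.dual_finrank_eq.trans hV)]

theorem card_addSubgroup_card_eq_pow {p n : ℕ} [Fact p.Prime] {G : Type*} [AddCommGroup G]
    [Module (ZMod p) G] (hG : Nat.card G = p ^ (n + 1)) :
    Nat.card {W : AddSubgroup G // Nat.card W = p ^ n} = ∑ i ∈ Finset.range (n + 1), p ^ i := by
  have : Finite G := Nat.finite_of_card_ne_zero (hG ▸ (pow_pos (Fact.out : p.Prime).pos _).ne')
  have card_eq_pow_iff (W : Submodule (ZMod p) G) (k : ℕ) :
      Nat.card W = p ^ k ↔ Module.finrank (ZMod p) W = k := by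
    rw [Module.natCard_eq_pow_finrank (K := ZMod p), Nat.card_zmod,
      Nat.pow_right_inj (Fact.out : p.Prime).one_lt]
  have finrank_G : Module.finrank (ZMod p) G = n + 1 := by
    rw [← finrank_top, ← card_eq_pow_iff, ← hG]
    exact Nat.card_congr (Equiv.Set.univ G)
  let e : {W : AddSubgroup G // Nat.card W = p ^ n} ≃
      {W : Submodule (ZMod p) G // Module.finrank (ZMod p) W = n} :=
    (AddSubgroup.toZModSubmodule p (M := G)).toEquiv.subtypeEquiv fun W ↦
      card_eq_pow_iff (AddSubgroup.toZModSubmodule p W) n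
  rw [Nat.card_congr e, card_submodule_finrank_eq finrank_G, Nat.card_zmod]

/-- The subgroup `A[n]` of elements killed by `n`. -/
abbrev nTorsion (A : Type*) [AddCommGroup A] (n : ℕ) : AddSubgroup A :=
  (nsmulAddMonoidHom n : A →+ A).ker

/-- The subgroup `nA`. -/
abbrev nMultiples (A : Type*) [AddCommGroup A] (n : ℕ) : AddSubgroup A :=
  (nsmulAddMonoidHom n : A →+ A).range

section TorsionMultiples

variable {B : Type*} [AddCommGroup B]

theorem card_nTorsion_mul_card_nMultiples (n : ℕ) :
    Nat.card (nTorsion B n) * Nat.card (nMultiples B n) = Nat.card B := by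
  rw [nMultiples, AddMonoidHom.range_eq_map, card_ker_mul_card_map _ le_top, AddSubgroup.card_top]

theorem map_nsmul_nMultiples (m n : ℕ) :
    (nMultiples B n).map (nsmulAddMonoidHom m) = nMultiples B (m * n) := by
  rw [AddMonoidHom.map_range]
  congr 1
  ext x
  exact (mul_nsmul' x m n).symm

theorem comap_nsmul_nTorsion (m n : ℕ) :
    (nTorsion B n).comap (nsmulAddMonoidHom m) = nTorsion B (m * n) := by
  ext x
  change n • m • x = 0 ↔ (m * n) • x = 0
  rw [mul_nsmul]

theorem nTorsion_le_nTorsion {m n : ℕ} (h : m ∣ n) : nTorsion B m ≤ nTorsion B n := by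
  obtain ⟨k, rfl⟩ := h
  intro x (hx : m • x = 0)
  change (m * k) • x = 0
  rw [mul_nsmul, hx, nsmul_zero]

theorem nMultiples_le_nMultiples {m n : ℕ} (h : m ∣ n) : nMultiples B n ≤ nMultiples B m := by
  obtain ⟨k, rfl⟩ := h
  rintro _ ⟨x, rfl⟩
  exact ⟨k • x, (mul_nsmul' x m k).symm⟩

theorem nMultiples_le_nTorsion_iff {m n : ℕ} :
    nMultiples B m ≤ nTorsion B n ↔ nTorsion B (m * n) = ⊤ := by
  rw [← comap_nsmul_nTorsion, nMultiples, AddMonoidHom.range_eq_map,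
    AddSubgroup.map_le_iff_le_comap, top_le_iff]

theorem comap_nsmul_nMultiples (m n : ℕ) :
    (nMultiples B (m * n)).comap (nsmulAddMonoidHom m) = nTorsion B m ⊔ nMultiples B n := by
  rw [← map_nsmul_nMultiples, AddSubgroup.comap_map_eq, sup_comm]

theorem card_nTorsion_sup_nMultiples (m n : ℕ) :
    Nat.card (nTorsion B m ⊔ nMultiples B n : AddSubgroup B) =
      Nat.card (nTorsion B m) * Nat.card (nMultiples B (m * n)) := by
  rw [← comap_nsmul_nMultiples,
    card_comap_of_le_range _ (nMultiples_le_nMultiples (dvd_mul_right m n))]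

theorem comap_nsmul_nTorsion_sup_nMultiples (m n k : ℕ) :
    (nTorsion B n ⊔ nMultiples B (m * k)).comap (nsmulAddMonoidHom m) =
      nTorsion B (m * n) ⊔ nMultiples B k := by
  rw [← comap_nsmul_nMultiples, ← comap_nsmul_nMultiples, mul_left_comm, mul_assoc]
  ext x
  change n • m • x ∈ nMultiples B (m * (n * k)) ↔ (m * n) • x ∈ nMultiples B (m * (n * k))
  rw [mul_nsmul]

theorem nTorsion_addSubgroup (U : AddSubgroup B) (n : ℕ) :
    nTorsion U n = (nTorsion B n).addSubgroupOf U := by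
  ext x
  exact Subtype.ext_iff

theorem nTorsion_addSubgroup_eq_top_iff {U : AddSubgroup B} {n : ℕ} :
    nTorsion U n = ⊤ ↔ U ≤ nTorsion B n := by
  rw [nTorsion_addSubgroup, AddSubgroup.addSubgroupOf_eq_top]

theorem card_nTorsion_addSubgroup_eq_iff [Finite B] {U : AddSubgroup B} {n : ℕ} :
    Nat.card (nTorsion U n) = Nat.card (nTorsion B n) ↔ nTorsion B n ≤ U := by
  rw [nTorsion_addSubgroup, ← AddSubgroup.inf_addSubgroupOf_right, card_addSubgroupOf inf_le_right]
  refine ⟨fun h ↦ ?_, fun h ↦ by rw [inf_eq_left.2 h]⟩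
  exact inf_eq_left.1 (AddSubgroup.eq_of_le_of_card_ge inf_le_left h.ge)

theorem nTorsion_quotient_eq_top_iff {U : AddSubgroup B} {n : ℕ} :
    nTorsion (B ⧸ U) n = ⊤ ↔ nMultiples B n ≤ U := by
  rw [AddSubgroup.eq_top_iff']
  constructor
  · rintro h _ ⟨x, rfl⟩
    exact (QuotientAddGroup.eq_zero_iff _).1 (h x)
  · intro h x
    induction x using QuotientAddGroup.induction_on with
    | H x => exact (QuotientAddGroup.eq_zero_iff _).2 (h ⟨x, rfl⟩)

theorem card_mul_card_nTorsion_quotient {K L : AddSubgroup B} (hKL : K ≤ L) {n : ℕ}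
    (hL : K.comap (nsmulAddMonoidHom n) ≤ L) :
    Nat.card K * Nat.card (nTorsion (L ⧸ K.addSubgroupOf L) n) =
      Nat.card (K.comap (nsmulAddMonoidHom n)) := by
  have comap_mk : (nTorsion (L ⧸ K.addSubgroupOf L) n).comap (QuotientAddGroup.mk' _) =
      (K.comap (nsmulAddMonoidHom n)).addSubgroupOf L := by
    ext x
    exact QuotientAddGroup.eq_zero_iff (n • x)
  rw [← card_addSubgroupOf hL, ← comap_mk,
    card_comap_of_surjective (QuotientAddGroup.mk'_surjective _), QuotientAddGroup.ker_mk',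
    card_addSubgroupOf hKL]

end TorsionMultiples

theorem not_isAddCyclic_iff_le_nTorsion {p : ℕ} (hp : p.Prime) {G : Type*} [AddCommGroup G]
    {W : AddSubgroup G} (hW : Nat.card W = p ^ 2) :
    ¬IsAddCyclic W ↔ W ≤ nTorsion G p := by
  have le_nTorsion_iff : W ≤ nTorsion G p ↔ AddMonoid.exponent W ∣ p := by
    rw [AddMonoid.exponent_dvd_iff_forall_nsmul_eq_zero]
    simp [SetLike.le_def, Subtype.ext_iff]
  rw [le_nTorsion_iff]
  constructor
  · rw [not_isAddCyclic_iff_exponent_eq_prime hp hW]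
    exact dvd_of_eq
  · intro hdvd hcyc
    rw [IsAddCyclic.exponent_eq_card, hW] at hdvd
    have := Nat.le_of_dvd hp.pos hdvd
    nlinarith [hp.two_le]

theorem mul_nsmul_eq_zero_of_card_eq_card_nTorsion_mul {n m : ℕ} {G : Type*} [AddCommGroup G]
    [Finite G] (hG : Nat.card G = Nat.card (nTorsion G n) * m) (x : G) : (n * m) • x = 0 := by
  have index_nTorsion : (nTorsion G n).index = m := by
    rw [← AddSubgroup.card_mul_index (nTorsion G n)] at hG
    exact Nat.eq_of_mul_eq_mul_left Nat.card_pos hG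
  rw [mul_nsmul', ← index_nTorsion]
  exact (nTorsion G n).nsmul_index_mem x

theorem card_isAddCyclic_mul_add_card_nTorsion {p n : ℕ} (hp : p.Prime) {G : Type*}
    [AddCommGroup G] [Finite G] (hG : ∀ x : G, p ^ (n + 1) • x = 0) :
    Nat.card {W : AddSubgroup G // IsAddCyclic W ∧ Nat.card W = p ^ (n + 1)} * (p ^ n * (p - 1)) +
      Nat.card (nTorsion G (p ^ n)) = Nat.card G := by
  have addOrderOf_eq_iff (x : G) : addOrderOf x = p ^ (n + 1) ↔ x ∉ nTorsion G (p ^ n) := by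
    constructor
    · rintro hx (hpx : p ^ n • x = 0)
      have hdvd : p ^ (n + 1) ∣ p ^ n := hx ▸ addOrderOf_dvd_of_nsmul_eq_zero hpx
      exact n.not_succ_le_self ((Nat.pow_dvd_pow_iff_le_right hp.one_lt).1 hdvd)
    · intro hx
      have := Fact.mk hp
      exact addOrderOf_eq_prime_pow hx (hG x)
  have card_eq := card_addOrderOf_eq (G := G) (p ^ (n + 1))
  rw [Nat.totient_prime_pow_succ hp,
    Nat.card_congr (Equiv.subtypeEquivRight addOrderOf_eq_iff)] at card_eq
  classical
  rw [← card_eq, add_comm, ← Nat.card_sum]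
  exact Nat.card_congr (Equiv.sumCompl (· ∈ nTorsion G (p ^ n)))

theorem card_addSubgroup_card_eq_sq {p : ℕ} (hp : p.Prime) {G : Type*} [AddCommGroup G]
    (hG : Nat.card G = p ^ 4) (htors : Nat.card (nTorsion G p) = p ^ 3) :
    Nat.card {W : AddSubgroup G // Nat.card W = p ^ 2} = 2 * p ^ 2 + p + 1 := by
  have := Fact.mk hp
  have : Finite G := Nat.finite_of_card_ne_zero (by simp [hG, hp.ne_zero])
  set E := nTorsion G p
  have not_cyclic : Nat.card {W : AddSubgroup G // ¬IsAddCyclic W ∧ Nat.card W = p ^ 2} =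
      p ^ 2 + p + 1 := by
    have iff_le_nTorsion (W : AddSubgroup G) :
        ¬IsAddCyclic W ∧ Nat.card W = p ^ 2 ↔ W ≤ E ∧ Nat.card W = p ^ 2 :=
      and_congr_left (not_isAddCyclic_iff_le_nTorsion hp)
    let : Module (ZMod p) E := AddCommGroup.zmodModule fun x ↦ Subtype.ext x.2
    rw [Nat.card_congr (Equiv.subtypeEquivRight iff_le_nTorsion), card_addSubgroup_le,
      card_addSubgroup_card_eq_pow htors]
    simp only [Finset.sum_range_succ, Finset.sum_range_zero]
    ring
  have cyclic : Nat.card {W : AddSubgroup G // IsAddCyclic W ∧ Nat.card W = p ^ 2} = p ^ 2 := by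
    have sq_nsmul (x : G) : p ^ 2 • x = 0 := by
      rw [sq]
      exact mul_nsmul_eq_zero_of_card_eq_card_nTorsion_mul (by rw [hG, htors, pow_succ]) x
    have card_eq := card_isAddCyclic_mul_add_card_nTorsion (n := 1) hp sq_nsmul
    rw [pow_one, htors, hG, one_add_one_eq_two] at card_eq
    refine Nat.eq_of_mul_eq_mul_right (Nat.mul_pos hp.pos (Nat.sub_pos_of_lt hp.one_lt)) ?_
    zify [hp.one_le] at card_eq ⊢
    linear_combination card_eq
  classical
  have split := (Equiv.sumCompl
    fun W : {W : AddSubgroup G // Nat.card W = p ^ 2} ↦ IsAddCyclic W.1).symm.trans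
      (.sumCongr (Equiv.subtypeSubtypeEquivSubtypeInter _ fun W : AddSubgroup G ↦ IsAddCyclic W)
        (Equiv.subtypeSubtypeEquivSubtypeInter _ fun W : AddSubgroup G ↦ ¬IsAddCyclic W))
  simp only [and_comm (a := Nat.card _ = _)] at split
  rw [Nat.card_congr split, Nat.card_sum, not_cyclic, cyclic]
  ring

/-- The finite abelian group `A` has type `e`, that is, `A ≅ ⨁ᵢ ℤ/p^eᵢ`. Unlike for partitions, the
exponents need not be positive or sorted. -/
def HasType (p : ℕ) {d : ℕ} (e : Fin d → ℕ) (A : Type*) [AddCommGroup A] : Prop :=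
  Nonempty (A ≃+ ∀ i, ZMod (p ^ e i))

theorem pow_gcd_pow_eq_pow_min (a m n : ℕ) : (a ^ m).gcd (a ^ n) = a ^ min m n := by
  rcases le_total m n with h | h
  · rw [min_eq_left h, Nat.gcd_eq_left (pow_dvd_pow a h)]
  · rw [min_eq_right h, Nat.gcd_eq_right (pow_dvd_pow a h)]

namespace HasType

variable {p d : ℕ} {e : Fin d → ℕ} {A : Type*} [AddCommGroup A]

theorem card_eq (h : HasType p e A) : Nat.card A = p ^ ∑ i, e i := by
  obtain ⟨f⟩ := h
  simp [Nat.card_congr f.toEquiv, Nat.card_pi, Finset.prod_pow_eq_pow_sum]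

theorem finite (hp : p.Prime) (h : HasType p e A) : Finite A :=
  Nat.finite_of_card_ne_zero (h.card_eq ▸ (pow_pos hp.pos _).ne')

theorem card_nTorsion_pow (hp : p.Prime) (h : HasType p e A) (k : ℕ) :
    Nat.card (nTorsion A (p ^ k)) = p ^ ∑ i, min (e i) k := by
  obtain ⟨f⟩ := h
  let g : nTorsion A (p ^ k) ≃ ∀ i, nTorsion (ZMod (p ^ e i)) (p ^ k) :=
    (f.toEquiv.subtypeEquiv fun x ↦ by
      change p ^ k • x = 0 ↔ ∀ i, p ^ k • f x i = 0
      rw [← f.map_eq_zero_iff, map_nsmul, funext_iff]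
      rfl).trans (Equiv.subtypePiEquivPi (p := fun i (x : ZMod (p ^ e i)) ↦ p ^ k • x = 0))
  have (i : Fin d) : NeZero (p ^ e i) := ⟨(pow_pos hp.pos _).ne'⟩
  have card_factor (i : Fin d) :
      Nat.card (nTorsion (ZMod (p ^ e i)) (p ^ k)) = p ^ min (e i) k := by
    rw [IsAddCyclic.card_nsmulAddMonoidHom_ker, Nat.card_zmod, pow_gcd_pow_eq_pow_min]
  simp only [Nat.card_congr g, Nat.card_pi, card_factor, Finset.prod_pow_eq_pow_sum]

theorem card_nTorsion (hp : p.Prime) (he : ∀ i, 0 < e i) (h : HasType p e A) :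
    Nat.card (nTorsion A p) = p ^ d := by
  have min_eq_one (i : Fin d) : min (e i) 1 = 1 := min_eq_right (he i)
  simpa only [pow_one, min_eq_one, Finset.sum_const, Finset.card_univ, Fintype.card_fin,
    smul_eq_mul, mul_one] using h.card_nTorsion_pow hp 1

theorem nTorsion_pow_eq_top_iff (hp : p.Prime) (h : HasType p e A) (k : ℕ) :
    nTorsion A (p ^ k) = ⊤ ↔ ∀ i, e i ≤ k := by
  have := h.finite hp
  rw [← AddSubgroup.card_eq_iff_eq_top, h.card_nTorsion_pow hp, h.card_eq,
    Nat.pow_right_inj hp.one_lt, Finset.sum_eq_sum_iff_of_le fun _ _ ↦ min_le_left _ _]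
  simp

theorem card_nMultiples_pow (hp : p.Prime) (h : HasType p e A) (k : ℕ) :
    Nat.card (nMultiples A (p ^ k)) = p ^ ∑ i, (e i - k) := by
  refine Nat.eq_of_mul_eq_mul_left (pow_pos hp.pos (∑ i, min (e i) k)) ?_
  rw [← h.card_nTorsion_pow hp, card_nTorsion_mul_card_nMultiples, h.card_eq,
    h.card_nTorsion_pow hp, ← pow_add, ← Finset.sum_add_distrib]
  congr! with i
  lia

theorem nMultiples_le_nTorsion_iff (hp : p.Prime) (h : HasType p e A)
    {k l : ℕ} : nMultiples A (p ^ k) ≤ nTorsion A (p ^ l) ↔ ∀ i, e i ≤ k + l := by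
  rw [_root_.nMultiples_le_nTorsion_iff, ← pow_add, h.nTorsion_pow_eq_top_iff hp]

end HasType

theorem exists_hasType_of_card_eq_pow {p n : ℕ} (hp : p.Prime) {A : Type*} [AddCommGroup A]
    (hA : Nat.card A = p ^ n) :
    ∃ (d : ℕ) (e : Fin d → ℕ), Antitone e ∧ (∀ i, 0 < e i) ∧ HasType p e A := by
  have : Finite A := Nat.finite_of_card_ne_zero (hA ▸ (pow_pos hp.pos _).ne')
  obtain ⟨ι, _, m, hm, ⟨f⟩⟩ := AddCommGroup.equiv_directSum_zmod_of_finite' A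
  have f' : A ≃+ ∀ i, ZMod (m i) := f.trans (DirectSum.addEquivProd fun i ↦ ZMod (m i))
  have dvd_card (i : ι) : m i ∣ p ^ n := by
    rw [← hA, Nat.card_congr f'.toEquiv, Nat.card_pi]
    simpa using Finset.dvd_prod_of_mem m (Finset.mem_univ i)
  choose k hk using fun i ↦ (Nat.dvd_prime_pow hp).1 (dvd_card i)
  obtain rfl : m = fun i ↦ p ^ k i := funext fun i ↦ (hk i).2
  let g := Fintype.equivFin ι
  let σ := (Tuple.sort (OrderDual.toDual ∘ k ∘ g.symm)).trans g.symm
  exact ⟨Fintype.card ι, k ∘ σ, Tuple.monotone_sort (OrderDual.toDual ∘ k ∘ g.symm),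
    fun i ↦ Nat.pos_of_ne_zero fun h ↦ by simpa [show k (σ i) = 0 from h] using hm (σ i),
    ⟨f'.trans (RingEquiv.piCongrLeft (fun i ↦ ZMod (p ^ k i)) σ).symm.toAddEquiv⟩⟩

section Types

variable {p : ℕ} {A : Type*} [AddCommGroup A]

theorem hasType_three_two_one_iff (hp : p.Prime) :
    HasType p ![3, 2, 1] A ↔ Nat.card A = p ^ 6 ∧
      Nat.card (nTorsion A p) = p ^ 3 ∧
      nTorsion A (p ^ 2) ≠ ⊤ ∧ nTorsion A (p ^ 3) = ⊤ := by
  constructor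
  · intro h
    rw [h.card_eq, h.card_nTorsion hp (by decide), Ne, h.nTorsion_pow_eq_top_iff hp,
      h.nTorsion_pow_eq_top_iff hp]
    exact ⟨rfl, rfl, by decide, by decide⟩
  · rintro ⟨hA, htors, hsq, hcube⟩
    obtain ⟨d, e, anti, pos, h⟩ := exists_hasType_of_card_eq_pow hp hA
    rw [h.card_nTorsion hp pos, Nat.pow_right_inj hp.one_lt] at htors
    rw [h.card_eq, Nat.pow_right_inj hp.one_lt] at hA
    rw [Ne, h.nTorsion_pow_eq_top_iff hp] at hsq
    rw [h.nTorsion_pow_eq_top_iff hp] at hcube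
    subst htors
    rw [Fin.sum_univ_three] at hA
    obtain ⟨i, hi⟩ := not_forall.1 hsq
    have hi₀ : e i ≤ e 0 := anti (Fin.zero_le i)
    have h₂₁ : e 2 ≤ e 1 := anti (by decide)
    have h₀ := hcube 0
    have h₂ := pos 2
    obtain ⟨e₀, e₁, e₂⟩ : e 0 = 3 ∧ e 1 = 2 ∧ e 2 = 1 := by lia
    have : e = ![3, 2, 1] := by
      ext j
      fin_cases j <;> assumption
    exact this ▸ h

theorem hasType_two_one_iff (hp : p.Prime) :
    HasType p ![2, 1] A ↔ Nat.card A = p ^ 3 ∧ nTorsion A p ≠ ⊤ ∧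
      nTorsion A (p ^ 2) = ⊤ := by
  have nTorsion_eq_top_iff {d : ℕ} {e : Fin d → ℕ} (h : HasType p e A) :
      nTorsion A p = ⊤ ↔ ∀ i, e i ≤ 1 := by
    rw [← h.nTorsion_pow_eq_top_iff hp, pow_one]
  constructor
  · intro h
    rw [h.card_eq, Ne, nTorsion_eq_top_iff h, h.nTorsion_pow_eq_top_iff hp]
    exact ⟨rfl, by decide, by decide⟩
  · rintro ⟨hA, htors, hsq⟩
    obtain ⟨d, e, anti, pos, h⟩ := exists_hasType_of_card_eq_pow hp hA
    rw [h.card_eq, Nat.pow_right_inj hp.one_lt] at hA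
    rw [Ne, nTorsion_eq_top_iff h] at htors
    rw [h.nTorsion_pow_eq_top_iff hp] at hsq
    obtain ⟨i, hi⟩ := not_forall.1 htors
    have : d ≤ 3 := by
      simpa [hA] using Finset.card_nsmul_le_sum Finset.univ e 1 fun j _ ↦ pos j
    obtain rfl : d = 2 := by
      interval_cases d
      · exact i.elim0
      · rw [Fin.sum_univ_one] at hA
        have := hsq 0
        lia
      · rfl
      · rw [Fin.sum_univ_three] at hA
        have hi₀ : e i ≤ e 0 := anti (Fin.zero_le i)
        have h₁ := pos 1
        have h₂ := pos 2
        lia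
    rw [Fin.sum_univ_two] at hA
    have hi₀ : e i ≤ e 0 := anti (Fin.zero_le i)
    have h₀ := hsq 0
    obtain ⟨e₀, e₁⟩ : e 0 = 2 ∧ e 1 = 1 := by lia
    have : e = ![2, 1] := by
      ext j
      fin_cases j <;> assumption
    exact this ▸ h

theorem hasType_pair_iff {a b : ℕ} :
    HasType p ![a, b] A ↔ Nonempty (A ≃+ ZMod (p ^ a) × ZMod (p ^ b)) := by
  let e : (∀ i, ZMod (p ^ ![a, b] i)) ≃+ ZMod (p ^ a) × ZMod (p ^ b) :=
    (RingEquiv.piFinTwo fun i ↦ ZMod (p ^ ![a, b] i)).toAddEquiv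
  exact ⟨fun ⟨f⟩ ↦ ⟨f.trans e⟩, fun ⟨f⟩ ↦ ⟨f.trans e.symm⟩⟩

theorem hasType_triple_iff {a b c : ℕ} :
    HasType p ![a, b, c] A ↔ Nonempty (A ≃+ ZMod (p ^ a) × ZMod (p ^ b) × ZMod (p ^ c)) := by
  let e : (∀ i, ZMod (p ^ ![a, b, c] i)) ≃+ ZMod (p ^ a) × ZMod (p ^ b) × ZMod (p ^ c) :=
    { toFun f := (f 0, f 1, f 2)
      invFun x := Fin.cons x.1 (Fin.cons x.2.1 (Fin.cons x.2.2 finZeroElim))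
      left_inv f := by ext i; fin_cases i <;> rfl
      right_inv _ := rfl
      map_add' _ _ := rfl }
  exact ⟨fun ⟨f⟩ ↦ ⟨f.trans e⟩, fun ⟨f⟩ ↦ ⟨f.trans e.symm⟩⟩

end Types

/-- `B ≅ ℤ/p⁴ × ℤ/p³ × ℤ/p²`, the ambient group of the Hall polynomial. -/
abbrev HasType432 (p : ℕ) (B : Type*) [AddCommGroup B] : Prop :=
  HasType p ![4, 3, 2] B

/-- `U` corresponds to a subgroup of order `p²` of `B[p³] / (B[p] + p²B)` when `B` has type
`(4, 3, 2)`. -/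
def IsIntermediate (p : ℕ) {B : Type*} [AddCommGroup B] (U : AddSubgroup B) : Prop :=
  (nTorsion B p ⊔ nMultiples B (p ^ 2) ≤ U ∧ U ≤ nTorsion B (p ^ 3)) ∧ Nat.card U = p ^ 6

namespace HasType432

variable {p : ℕ} {B : Type*} [AddCommGroup B]

theorem card_nTorsion (hp : p.Prime) (h : HasType432 p B) : Nat.card (nTorsion B p) = p ^ 3 :=
  HasType.card_nTorsion hp (by decide) h

theorem card_nTorsion_sq (hp : p.Prime) (h : HasType432 p B) :
    Nat.card (nTorsion B (p ^ 2)) = p ^ 6 :=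
  h.card_nTorsion_pow hp 2

theorem card_nMultiples (hp : p.Prime) (h : HasType432 p B) :
    Nat.card (nMultiples B p) = p ^ 6 := by
  have card_eq := h.card_nMultiples_pow hp 1
  rw [pow_one] at card_eq
  exact card_eq

theorem card_nMultiples_cube (hp : p.Prime) (h : HasType432 p B) :
    Nat.card (nMultiples B (p ^ 3)) = p :=
  (h.card_nMultiples_pow hp 3).trans (pow_one p)

theorem nMultiples_le_nTorsion_cube (hp : p.Prime) (h : HasType432 p B) :
    nMultiples B p ≤ nTorsion B (p ^ 3) := by
  simpa only [pow_one] using (h.nMultiples_le_nTorsion_iff hp (k := 1) (l := 3)).2 (by decide)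

theorem nMultiples_ne_nTorsion_sq (hp : p.Prime) (h : HasType432 p B) :
    nMultiples B p ≠ nTorsion B (p ^ 2) := by
  intro heq
  have := (h.nMultiples_le_nTorsion_iff hp (k := 1) (l := 2)).1 (by rw [pow_one, heq])
  exact absurd this (by decide)

theorem nTorsion_le_nMultiples (hp : p.Prime) (h : HasType432 p B) :
    nTorsion B p ≤ nMultiples B p := by
  have := h.finite hp
  have map_le : (nTorsion B (p ^ 2)).map (nsmulAddMonoidHom p) ≤ nTorsion B p := by
    rw [AddSubgroup.map_le_iff_le_comap, comap_nsmul_nTorsion, sq]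
  have card_map : Nat.card ((nTorsion B (p ^ 2)).map (nsmulAddMonoidHom p)) = p ^ 3 := by
    refine Nat.eq_of_mul_eq_mul_left (pow_pos hp.pos 3) ?_
    rw [← h.card_nTorsion hp,
      card_ker_mul_card_map _ (nTorsion_le_nTorsion (dvd_pow_self p two_ne_zero)),
      h.card_nTorsion_sq hp, h.card_nTorsion hp, ← pow_add]
  rw [← AddSubgroup.eq_of_le_of_card_ge map_le (h.card_nTorsion hp ▸ card_map.ge)]
  exact AddSubgroup.map_le_range _ _

theorem hasType_addSubgroup_and_quotient_iff (hp : p.Prime) (h : HasType432 p B)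
    {U : AddSubgroup B} :
    HasType p ![3, 2, 1] U ∧ HasType p ![2, 1] (B ⧸ U) ↔
      IsIntermediate p U ∧ U ≠ nMultiples B p ∧ U ≠ nTorsion B (p ^ 2) := by
  have := h.finite hp
  have card_nTorsion_iff : Nat.card (nTorsion U p) = p ^ 3 ↔ nTorsion B p ≤ U := by
    rw [← h.card_nTorsion hp, card_nTorsion_addSubgroup_eq_iff]
  have card_quotient (hU : Nat.card U = p ^ 6) : Nat.card (B ⧸ U) = p ^ 3 := by
    refine Nat.eq_of_mul_eq_mul_right (pow_pos hp.pos 6) ?_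
    rw [← hU, ← AddSubgroup.card_eq_card_quotient_mul_card_addSubgroup, h.card_eq, hU]
    exact pow_add p 3 6
  have eq_nMultiples_iff (hU : Nat.card U = p ^ 6) : U = nMultiples B p ↔ nMultiples B p ≤ U :=
    ⟨Eq.ge, fun hle ↦ (AddSubgroup.eq_of_le_of_card_ge hle (by rw [hU, h.card_nMultiples hp])).symm⟩
  have eq_nTorsion_iff (hU : Nat.card U = p ^ 6) :
      U = nTorsion B (p ^ 2) ↔ U ≤ nTorsion B (p ^ 2) :=
    ⟨Eq.le, fun hle ↦ AddSubgroup.eq_of_le_of_card_ge hle (by rw [hU, h.card_nTorsion_sq hp])⟩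
  rw [hasType_three_two_one_iff hp, hasType_two_one_iff hp, IsIntermediate,
    card_nTorsion_iff, sup_le_iff, Ne, nTorsion_addSubgroup_eq_top_iff,
    nTorsion_addSubgroup_eq_top_iff, nTorsion_quotient_eq_top_iff, Ne, nTorsion_quotient_eq_top_iff]
  grind

theorem card_isIntermediate (hp : p.Prime) (h : HasType432 p B) :
    Nat.card {U : AddSubgroup B // IsIntermediate p U} = 2 * p ^ 2 + p + 1 := by
  have := h.finite hp
  set K := nTorsion B p ⊔ nMultiples B (p ^ 2) with hK
  set L := nTorsion B (p ^ 3)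
  have card_K : Nat.card K = p ^ 4 := by
    rw [card_nTorsion_sup_nMultiples, h.card_nTorsion hp, ← pow_succ', h.card_nMultiples_cube hp,
      ← pow_succ]
  have card_L : Nat.card L = p ^ 8 := h.card_nTorsion_pow hp 3
  have K_le_L : K ≤ L :=
    sup_le (nTorsion_le_nTorsion (dvd_pow_self p three_ne_zero))
      ((h.nMultiples_le_nTorsion_iff hp).2 (by decide))
  have comap_K : K.comap (nsmulAddMonoidHom p) = nTorsion B (p ^ 2) ⊔ nMultiples B p := by
    rw [hK, sq p, comap_nsmul_nTorsion_sup_nMultiples]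
  have comap_le : K.comap (nsmulAddMonoidHom p) ≤ L :=
    comap_K.trans_le (sup_le (nTorsion_le_nTorsion (pow_dvd_pow p (by decide)))
      (h.nMultiples_le_nTorsion_cube hp))
  have card_quotient : Nat.card (L ⧸ K.addSubgroupOf L) = p ^ 4 := by
    refine Nat.eq_of_mul_eq_mul_right (pow_pos hp.pos 4) ?_
    have := AddSubgroup.card_eq_card_quotient_mul_card_addSubgroup (K.addSubgroupOf L)
    rw [card_addSubgroupOf K_le_L, card_K] at this
    rw [← this, card_L, ← pow_add]
  have card_quotient_nTorsion : Nat.card (nTorsion (L ⧸ K.addSubgroupOf L) p) = p ^ 3 := by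
    refine Nat.eq_of_mul_eq_mul_left (pow_pos hp.pos 4) ?_
    rw [← card_K, card_mul_card_nTorsion_quotient K_le_L comap_le, comap_K,
      card_nTorsion_sup_nMultiples, h.card_nTorsion_sq hp, ← pow_succ, h.card_nMultiples_cube hp,
      card_K, ← pow_succ, ← pow_add]
  rw [← card_addSubgroup_card_eq_sq hp card_quotient card_quotient_nTorsion,
    ← card_addSubgroup_between K_le_L, card_K, ← pow_add]
  rfl

theorem isIntermediate_nMultiples (hp : p.Prime) (h : HasType432 p B) :
    IsIntermediate p (nMultiples B p) :=
  ⟨⟨sup_le (h.nTorsion_le_nMultiples hp) (nMultiples_le_nMultiples (dvd_pow_self p two_ne_zero)),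
    h.nMultiples_le_nTorsion_cube hp⟩, h.card_nMultiples hp⟩

theorem isIntermediate_nTorsion_sq (hp : p.Prime) (h : HasType432 p B) :
    IsIntermediate p (nTorsion B (p ^ 2)) :=
  ⟨⟨sup_le (nTorsion_le_nTorsion (dvd_pow_self p two_ne_zero))
    ((h.nMultiples_le_nTorsion_iff hp).2 (by decide)),
    nTorsion_le_nTorsion (pow_dvd_pow p (by decide))⟩, h.card_nTorsion_sq hp⟩

theorem card_hasType_addSubgroup_and_quotient (hp : p.Prime) (h : HasType432 p B) :
    Nat.card {U : AddSubgroup B // HasType p ![3, 2, 1] U ∧ HasType p ![2, 1] (B ⧸ U)} =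
      2 * p ^ 2 + p - 1 := by
  rw [Nat.card_congr (Equiv.subtypeEquivRight fun _ ↦ h.hasType_addSubgroup_and_quotient_iff hp),
    card_subtype_and_ne_and_ne (h.isIntermediate_nMultiples hp) (h.isIntermediate_nTorsion_sq hp)
      (h.nMultiples_ne_nTorsion_sq hp), h.card_isIntermediate hp]
  rfl

end HasType432

/-- The Hall polynomial `g_{(3,2,1),(2,1)}^{(4,3,2)}(p)`: the number of subgroups `U` of
`B = ℤ/p⁴ × ℤ/p³ × ℤ/p²` with `U ≅ ℤ/p³ × ℤ/p² × ℤ/p` and `B/U ≅ ℤ/p² × ℤ/p`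
equals `2p² + p - 1`. -/
theorem stmt_2 (p : ℕ) (hp : p.Prime) :
    Nat.card {U : AddSubgroup (ZMod (p ^ 4) × ZMod (p ^ 3) × ZMod (p ^ 2)) //
        Nonempty (U ≃+ (ZMod (p ^ 3) × ZMod (p ^ 2) × ZMod p)) ∧
        Nonempty ((ZMod (p ^ 4) × ZMod (p ^ 3) × ZMod (p ^ 2)) ⧸ U ≃+
          (ZMod (p ^ 2) × ZMod p))} = 2 * p ^ 2 + p - 1 := by
  have h : HasType432 p (ZMod (p ^ 4) × ZMod (p ^ 3) × ZMod (p ^ 2)) :=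
    hasType_triple_iff.2 ⟨.refl _⟩
  have card_eq := h.card_hasType_addSubgroup_and_quotient hp
  simp only [hasType_triple_iff, hasType_pair_iff] at card_eq
  rwa [pow_one] at card_eq
end

section
/- Let p be a prime and let 1 ≤ r ≤ m−2 be integers. Set B = ℤ/p^mℤ ⊕ ℤ/p^rℤ and let A be the cyclic subgroup of B generated by (p^{m−2}, p^{r−1}). Then the number of group endomorphisms f of B with f(A) ⊆ A equals p^{m+3r−1}. -/
/-!
Evaluation at `g` maps `End B` onto the orbit of `g`, which contains `⟨g⟩` because `End B`
contains the multiplications by integers. All fibres have the same size, so the endomorphisms with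
`f g ∈ ⟨g⟩` number `|End B| * |⟨g⟩| / |End B • g|`. If `B = G × H` with `G` and `H` finite cyclic
and `g = k • (x, y)`, where `y` generates `H` and the order of `k • y` divides that of `k • x`, then
the orbit of `g` is `⟨k • x⟩ × ⟨k • y⟩` while `⟨g⟩` has the order of `k • x`, so the count is
`|End B| / ord (k • y)`.
-/

open AddSubgroup

section AddCommGroup

variable {A B C : Type*} [AddCommGroup A] [AddCommGroup B] [AddCommGroup C]

lemma forall_mem_zmultiples_map_mem_iff (f : A →+ B) (K : AddSubgroup B) (g : A) :
    (∀ a ∈ zmultiples g, f a ∈ K) ↔ f g ∈ K :=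
  zmultiples_le (H := K.comap f)

lemma card_comap_mul_card_range (φ : A →+ B) {K : AddSubgroup B} (hK : K ≤ φ.range) :
    Nat.card (K.comap φ) * Nat.card φ.range = Nat.card A * Nat.card K := by
  have hindex : (K.comap φ).index * Nat.card K = Nat.card φ.range := by
    rw [index_comap, mul_comm, ← relIndex_bot_left, ← relIndex_bot_left,
      relIndex_mul_relIndex _ _ _ bot_le hK]
  rw [← hindex, ← mul_assoc, card_mul_index]

lemma zmultiples_le_range_eval (g : A) :
    zmultiples g ≤ (AddMonoidHom.eval g : (A →+ A) →+ A).range :=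
  zmultiples_le_of_mem ⟨AddMonoidHom.id A, rfl⟩

lemma card_preserving_zmultiples_mul_card_range_eval (g : A) :
    Nat.card {f : A →+ A // ∀ a ∈ zmultiples g, f a ∈ zmultiples g} *
        Nat.card (AddMonoidHom.eval g : (A →+ A) →+ A).range =
      Nat.card (A →+ A) * addOrderOf g := by
  rw [← Nat.card_zmultiples, ← card_comap_mul_card_range _ (zmultiples_le_range_eval g)]
  congr 1
  exact Nat.card_congr <| Equiv.subtypeEquivRight fun f =>
    forall_mem_zmultiples_map_mem_iff f _ g

lemma card_addMonoidHom_prod_left :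
    Nat.card (A × B →+ C) = Nat.card (A →+ C) * Nat.card (B →+ C) := by
  rw [← Nat.card_prod]
  refine (Nat.card_eq_of_bijective
    (fun f : (A →+ C) × (B →+ C) => f.1.coprod f.2) ⟨fun f g h => ?_, fun f => ?_⟩).symm
  · have hinl := congrArg (·.comp (AddMonoidHom.inl A B)) h
    have hinr := congrArg (·.comp (AddMonoidHom.inr A B)) h
    exact Prod.ext (by simpa using hinl) (by simpa using hinr)
  · exact ⟨(f.comp (AddMonoidHom.inl A B), f.comp (AddMonoidHom.inr A B)),
      AddMonoidHom.coprod_unique f⟩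

lemma card_addMonoidHom_prod_right :
    Nat.card (A →+ B × C) = Nat.card (A →+ B) * Nat.card (A →+ C) := by
  rw [← Nat.card_prod]
  refine (Nat.card_eq_of_bijective
    (fun f : (A →+ B) × (A →+ C) => f.1.prod f.2) ⟨fun f g h => ?_, fun f => ?_⟩).symm
  · exact Prod.ext (congrArg (AddMonoidHom.fst B C).comp h) (congrArg (AddMonoidHom.snd B C).comp h)
  · exact ⟨((AddMonoidHom.fst B C).comp f, (AddMonoidHom.snd B C).comp f),
      AddMonoidHom.prod_unique f⟩

lemma card_zmod_addMonoidHom (n : ℕ) :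
    Nat.card (ZMod n →+ A) = Nat.card (nsmulAddMonoidHom n : A →+ A).ker := by
  refine Nat.card_congr <| (ZMod.lift n (A := A)).symm.trans <|
    (zmultiplesHom A).symm.subtypeEquiv fun f => ?_
  rw [AddMonoidHom.mem_ker, nsmulAddMonoidHom_apply, zmultiplesHom_symm_apply, ← map_nsmul,
    nsmul_one]

end AddCommGroup

section Cyclic

variable {G H : Type*} [AddCommGroup G] [IsAddCyclic G] [Finite G] [AddCommGroup H]

lemma ker_nsmul_addOrderOf (x : G) :
    (nsmulAddMonoidHom (addOrderOf x) : G →+ G).ker = zmultiples x := by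
  refine (eq_of_le_of_card_ge (zmultiples_le_of_mem (addOrderOf_nsmul_eq_zero x)) ?_).symm
  rw [IsAddCyclic.card_nsmulAddMonoidHom_ker, Nat.card_zmultiples,
    Nat.gcd_eq_right (addOrderOf_dvd_natCard x)]

lemma range_eval_nsmul {x : G} {y : H} (hy : zmultiples y = ⊤) {k : ℕ}
    (hk : addOrderOf (k • y) ∣ addOrderOf (k • x)) :
    (AddMonoidHom.eval (k • x, k • y) : (G × H →+ G × H) →+ G × H).range =
      (zmultiples (k • x)).prod (zmultiples (k • y)) := by
  apply le_antisymm
  · rintro _ ⟨f, rfl⟩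
    constructor
    · have horder : addOrderOf (k • x) • (k • x, k • y) = 0 :=
        Prod.ext (addOrderOf_nsmul_eq_zero _) (addOrderOf_dvd_iff_nsmul_eq_zero.mp hk)
      rw [SetLike.mem_coe, ← ker_nsmul_addOrderOf]
      have himage : addOrderOf (k • x) • f (k • x, k • y) = 0 := by
        rw [← map_nsmul, horder, map_zero]
      exact congrArg Prod.fst himage
    · obtain ⟨c, hc⟩ : (f (x, y)).2 ∈ zmultiples y := hy ▸ mem_top _
      have himage : f (k • x, k • y) = k • f (x, y) := map_nsmul f k (x, y)
      exact ⟨c, by simp [himage, ← hc, smul_comm k c y]⟩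
  · rintro ⟨_, _⟩ ⟨⟨a, rfl⟩, ⟨b, rfl⟩⟩
    exact ⟨(zsmulAddGroupHom a).prodMap (zsmulAddGroupHom b), rfl⟩

lemma card_preserving_zmultiples_nsmul_mul_addOrderOf {x : G} {y : H} (hy : zmultiples y = ⊤)
    {k : ℕ} (hk : addOrderOf (k • y) ∣ addOrderOf (k • x)) :
    Nat.card {f : G × H →+ G × H //
        ∀ a ∈ zmultiples (k • x, k • y), f a ∈ zmultiples (k • x, k • y)} * addOrderOf (k • y) =
      Nat.card (G × H →+ G × H) := by
  have hcard := card_preserving_zmultiples_mul_card_range_eval (k • x, k • y)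
  rw [range_eval_nsmul hy hk, Nat.card_congr (prodEquiv _ _).toEquiv, Nat.card_prod,
    Nat.card_zmultiples, Nat.card_zmultiples, Prod.addOrderOf_mk, Nat.lcm_eq_left hk,
    mul_left_comm, mul_comm] at hcard
  exact Nat.eq_of_mul_eq_mul_right (addOrderOf_pos _) hcard

end Cyclic

section ZMod

variable {M N : ℕ} [NeZero M]

lemma card_zmod_addMonoidHom_zmod (n : ℕ) : Nat.card (ZMod n →+ ZMod M) = M.gcd n := by
  rw [card_zmod_addMonoidHom, IsAddCyclic.card_nsmulAddMonoidHom_ker, Nat.card_zmod]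

lemma card_addMonoidHom_zmod_prod (h : N ∣ M) :
    Nat.card (ZMod M × ZMod N →+ ZMod M × ZMod N) = M * N ^ 3 := by
  have : NeZero N := ⟨ne_zero_of_dvd_ne_zero (NeZero.ne M) h⟩
  simp only [card_addMonoidHom_prod_left, card_addMonoidHom_prod_right,
    card_zmod_addMonoidHom_zmod, Nat.gcd_self, Nat.gcd_eq_left h, Nat.gcd_eq_right h]
  ring

lemma addOrderOf_natCast_of_dvd {a : ℕ} (h : a ∣ M) : addOrderOf (a : ZMod M) = M / a := by
  rw [ZMod.addOrderOf_coe a (NeZero.ne M), Nat.gcd_eq_right h]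

theorem stmt_3_general {v w : ℕ} (hv : v ∣ N) (hw : N * w ∣ M) :
    Nat.card {f : (ZMod M × ZMod N) →+ (ZMod M × ZMod N) //
        ∀ a ∈ zmultiples (((v * w : ℕ) : ZMod M), (v : ZMod N)),
          f a ∈ zmultiples (((v * w : ℕ) : ZMod M), (v : ZMod N))} =
      M * N ^ 2 * v := by
  have hNM : N ∣ M := dvd_of_mul_right_dvd hw
  have : NeZero N := ⟨ne_zero_of_dvd_ne_zero (NeZero.ne M) hNM⟩
  have horder : addOrderOf (v : ZMod N) ∣ addOrderOf ((v * w : ℕ) : ZMod M) := by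
    rw [addOrderOf_natCast_of_dvd hv,
      addOrderOf_natCast_of_dvd ((Nat.mul_dvd_mul_right hv w).trans hw)]
    have hw_pos : 0 < w := Nat.pos_of_dvd_of_pos (dvd_of_mul_left_dvd hw) (NeZero.pos M)
    rw [← Nat.mul_div_mul_right N v hw_pos]
    exact Nat.div_dvd_div (Nat.mul_dvd_mul_right hv w) hw
  have hgen : zmultiples (1 : ZMod N) = ⊤ :=
    eq_top_iff.mpr fun z _ => ⟨z.cast, by simp⟩
  have hcard := card_preserving_zmultiples_nsmul_mul_addOrderOf (x := (w : ZMod M)) hgen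
    (k := v) (by simpa using horder)
  have hsmul : v • (w : ZMod M) = ((v * w : ℕ) : ZMod M) := by rw [nsmul_eq_mul, Nat.cast_mul]
  rw [hsmul, nsmul_one, card_addMonoidHom_zmod_prod hNM] at hcard
  refine Nat.eq_of_mul_eq_mul_right (addOrderOf_pos (v : ZMod N)) (hcard.trans ?_)
  rw [addOrderOf_natCast_of_dvd hv, mul_assoc _ v, Nat.mul_div_cancel' hv]
  ring

end ZMod

/-- The number of endomorphisms of the bipicket pair `T_2^{m,r}`, i.e. endomorphisms `f` of
`B = ℤ/p^m ⊕ ℤ/p^r` with `f(A) ⊆ A` where `A = ⟨(p^{m-2}, p^{r-1})⟩`, equals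
`p^{m+3r-1}`. -/
theorem stmt_3 (p : ℕ) (hp : p.Prime) (m r : ℕ) (h1 : 1 ≤ r) (h2 : r + 2 ≤ m) :
    Nat.card {f : (ZMod (p ^ m) × ZMod (p ^ r)) →+ (ZMod (p ^ m) × ZMod (p ^ r)) //
        ∀ a ∈ AddSubgroup.zmultiples ((p : ZMod (p ^ m)) ^ (m - 2), (p : ZMod (p ^ r)) ^ (r - 1)),
          f a ∈ AddSubgroup.zmultiples
            ((p : ZMod (p ^ m)) ^ (m - 2), (p : ZMod (p ^ r)) ^ (r - 1))} =
      p ^ (m + 3 * r - 1) := by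
  have : NeZero p := ⟨hp.ne_zero⟩
  have hv : p ^ (r - 1) ∣ p ^ r := pow_dvd_pow p (Nat.sub_le r 1)
  have hw : p ^ r * p ^ (m - r - 1) ∣ p ^ m := by
    rw [← pow_add]
    exact pow_dvd_pow p (by omega)
  convert stmt_3_general hv hw using 1
  · rw [← pow_add, show r - 1 + (m - r - 1) = m - 2 by omega, Nat.cast_pow, Nat.cast_pow]
  · rw [← pow_mul, ← pow_add, ← pow_add]
    congr 1
    omega
end

section
/- Let p be a prime and let 1 ≤ r ≤ m−2 be integers. Set B = ℤ/p^mℤ ⊕ ℤ/p^rℤ and let A be the cyclic subgroup of B generated by (p^{m−2}, p^{r−1}). Then the number of group automorphisms φ of B with φ(A) = A equals (p−1)·p^{m+3r−2}. -/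
/-!
An endomorphism of `ℤ/M ⊕ ℤ/N` is a matrix `(a, β; γ, d)` of homomorphisms. When `M = n ^ m`,
`N = n ^ r` and `r < m`, every value of `β` is a multiple of `n`, hence nilpotent, so invertibility
depends on `a` and `d` only. On `g = (n ^ (m - i), n ^ (r - j))` the entry `γ` vanishes and `β`
only changes `a` by a multiple of `n ^ j`. Since the two coordinates of `g` have annihilators
`n ^ i` and `n ^ j`, the image of `g` is a multiple of `g` exactly when `a ≡ d` modulo `n ^ j`.
The count is therefore the number of choices for a unit `a`, then for `d` in its class, and for
`β` and `γ` freely.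
-/

section General

lemma totient_pow_succ (n k : ℕ) : (n ^ (k + 1)).totient = n ^ k * n.totient := by
  induction k with
  | zero => simp
  | succ k ih =>
    rcases n.eq_zero_or_pos with rfl | hn
    · simp
    · have h := Nat.totient_gcd_mul_totient_mul n (n ^ (k + 1))
      rw [Nat.gcd_eq_left (dvd_pow_self n k.succ_ne_zero), ← pow_succ', ih] at h
      refine Nat.eq_of_mul_eq_mul_left (Nat.totient_pos.mpr hn) (h.trans ?_)
      ring

lemma map_zmultiples_eq_self_iff {G : Type*} [AddGroup G] [Finite G] {f : G →+ G}
    (hf : Function.Injective f) (g : G) :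
    (AddSubgroup.zmultiples g).map f = AddSubgroup.zmultiples g ↔
      f g ∈ AddSubgroup.zmultiples g := by
  rw [← AddSubgroup.zmultiples_le, ← AddMonoidHom.map_zmultiples]
  refine ⟨le_of_eq, fun h => AddSubgroup.eq_of_le_of_card_ge h ?_⟩
  exact (AddSubgroup.card_map_of_injective hf).ge

lemma card_addEquiv_map_eq_self {G : Type*} [AddGroup G] (A : AddSubgroup G) :
    Nat.card {φ : G ≃+ G // A.map φ.toAddMonoidHom = A} =
      Nat.card {f : G →+ G // Function.Bijective f ∧ A.map f = A} :=
  Nat.card_congr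
    { toFun := fun φ => ⟨φ.1.toAddMonoidHom, φ.1.bijective, φ.2⟩
      invFun := fun f => ⟨AddEquiv.ofBijective f.1 f.2.1, f.2.2⟩
      left_inv := fun _ => Subtype.ext (AddEquiv.ext fun _ => rfl)
      right_inv := fun _ => rfl }

lemma card_prod_and_dvd_sub {α R : Type*} [CommRing R] (P : α → Prop) (π : α → R) (c : R) :
    Nat.card {x : α × R // P x.1 ∧ c ∣ x.2 - π x.1} =
      Nat.card {a // P a} * Nat.card {e : R // c ∣ e} := by
  rw [← Nat.card_prod]
  exact Nat.card_congr
    { toFun := fun x => (⟨x.1.1, x.2.1⟩, ⟨x.1.2 - π x.1.1, x.2.2⟩)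
      invFun := fun y => ⟨(y.1, y.2 + π y.1), y.1.2, by simpa using y.2.2⟩
      left_inv := fun x => by simp
      right_inv := fun y => by simp }

lemma card_zmod_addMonoidHom_s4 (N : ℕ) (A : Type*) [AddCommGroup A] [IsAddCyclic A] [Finite A] :
    Nat.card (ZMod N →+ A) = (Nat.card A).gcd N := by
  rw [← IsAddCyclic.card_nsmulAddMonoidHom_ker]
  refine Nat.card_congr ((ZMod.lift N).symm.trans ?_)
  exact (zmultiplesHom A).symm.subtypeEquiv fun f => by
    have hN : f N = N • f 1 := by simp [← map_nsmul]
    simp [AddMonoidHom.mem_ker, hN]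

lemma card_natCast_dvd (M c : ℕ) [NeZero M] :
    Nat.card {x : ZMod M // (c : ZMod M) ∣ x} = M / M.gcd c := by
  have h := IsAddCyclic.card_nsmulAddMonoidHom_range (G := ZMod M) c
  rw [Nat.card_zmod] at h
  rw [← h]
  exact Nat.card_congr (Equiv.subtypeEquivRight fun x => by simp [dvd_def, eq_comm])

lemma card_isUnit_zmod (M : ℕ) [NeZero M] : Nat.card {a : ZMod M // IsUnit a} = M.totient := by
  classical
  rw [← ZMod.card_units_eq_totient, ← Nat.card_eq_fintype_card]
  exact Nat.card_congr Submonoid.unitsTypeEquivIsUnitSubmonoid.symm.toEquiv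

lemma natCast_dvd_iff_mul_eq_zero {M c e : ℕ} [NeZero M] (h : c * e = M) {x : ZMod M} :
    (c : ZMod M) ∣ x ↔ (e : ZMod M) * x = 0 := by
  constructor
  · rintro ⟨y, rfl⟩
    rw [← mul_assoc, ← Nat.cast_mul, mul_comm e, h, ZMod.natCast_self, zero_mul]
  · intro hx
    obtain ⟨y, rfl⟩ := ZMod.natCast_zmod_surjective x
    rw [← Nat.cast_mul, ZMod.natCast_eq_zero_iff, ← h, mul_comm] at hx
    have he : 0 < e := Nat.pos_of_ne_zero fun he => NeZero.ne M (by simp [← h, he])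
    exact Nat.cast_dvd_cast (Nat.dvd_of_mul_dvd_mul_left he hx)

end General

section Block

variable {M N : ℕ}

/-- The endomorphism of `ℤ/M ⊕ ℤ/N` with matrix `(a, β; γ, d)`, that is
`(x, y) ↦ (a x + β y, γ x + d y)`. The endomorphisms of the two cyclic summands are encoded by
the ring elements `a` and `d`. -/
def blockHom (a : ZMod M) (β : ZMod N →+ ZMod M) (γ : ZMod M →+ ZMod N) (d : ZMod N) :
    ZMod M × ZMod N →+ ZMod M × ZMod N :=
  ((AddMonoidHom.mulLeft a).prod γ).coprod (β.prod (AddMonoidHom.mulLeft d))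

@[simp]
lemma blockHom_apply (a : ZMod M) (β : ZMod N →+ ZMod M) (γ : ZMod M →+ ZMod N) (d : ZMod N)
    (x : ZMod M) (y : ZMod N) : blockHom a β γ d (x, y) = (a * x + β y, γ x + d * y) :=
  rfl

lemma zmod_addMonoidHom_apply (f : ZMod M →+ ZMod M) (x : ZMod M) : f x = f 1 * x := by
  simpa [mul_comm] using ZMod.map_smul f x 1

/-- Every endomorphism of `ℤ/M ⊕ ℤ/N` is given by a unique matrix. -/
def blockHomEquiv (M N : ℕ) :
    (ZMod M × ZMod N) × (ZMod N →+ ZMod M) × (ZMod M →+ ZMod N) ≃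
      (ZMod M × ZMod N →+ ZMod M × ZMod N) where
  toFun x := blockHom x.1.1 x.2.1 x.2.2 x.1.2
  invFun f := (((f (1, 0)).1, (f (0, 1)).2),
    (AddMonoidHom.fst _ _).comp (f.comp (AddMonoidHom.inr _ _)),
    (AddMonoidHom.snd _ _).comp (f.comp (AddMonoidHom.inl _ _)))
  left_inv x := by ext <;> simp
  right_inv f := by
    ext ⟨x, y⟩
    · have h := zmod_addMonoidHom_apply ((AddMonoidHom.fst _ _).comp (f.comp (.inl _ _))) x
      have hxy := congrArg Prod.fst (map_add f (x, 0) (0, y))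
      simp_all
    · have h := zmod_addMonoidHom_apply ((AddMonoidHom.snd _ _).comp (f.comp (.inr _ _))) y
      have hxy := congrArg Prod.snd (map_add f (x, 0) (0, y))
      simp_all

variable {a : ZMod M} {β : ZMod N →+ ZMod M} {γ : ZMod M →+ ZMod N} {d : ZMod N}

lemma bijective_blockHom [NeZero M] [NeZero N] (hβ : ∀ y, IsNilpotent (β y)) (ha : IsUnit a)
    (hd : IsUnit d) : Function.Bijective (blockHom a β γ d) := by
  refine Finite.injective_iff_bijective.mp ((injective_iff_map_eq_zero _).mpr ?_)
  rintro ⟨x, y⟩ hxy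
  obtain ⟨hx, hy⟩ : a * x + β y = 0 ∧ γ x + d * y = 0 := Prod.mk.inj hxy
  obtain ⟨e, he⟩ := hd.exists_left_inv
  have y_eq : y = -(e * γ x) := by linear_combination e * hy - y * he
  let δ : ZMod M →+ ZMod M := β.comp ((AddMonoidHom.mulLeft e).comp γ)
  have hδ : β (e * γ x) = δ 1 * x := zmod_addMonoidHom_apply δ x
  have hx' : (a - δ 1) * x = 0 := by
    rw [y_eq, map_neg, hδ] at hx
    linear_combination hx
  have hunit : IsUnit (a - δ 1) := by
    rw [sub_eq_add_neg]
    exact (hβ _).neg.isUnit_add_left_of_commute ha (Commute.all _ _)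
  have x_eq : x = 0 := hunit.mul_right_eq_zero.mp hx'
  simp [y_eq, x_eq]

lemma isUnit_of_surjective_blockHom (hβ : ∀ y, IsNilpotent (β y))
    (h : Function.Surjective (blockHom a β γ d)) : IsUnit a := by
  obtain ⟨⟨x, y⟩, hxy⟩ := h (1, 0)
  have hax : a * x = 1 - β y := eq_sub_of_add_eq (congrArg Prod.fst hxy)
  exact isUnit_of_mul_isUnit_left (hax ▸ (hβ y).isUnit_one_sub)

end Block

section PowerModulus

variable {n m r i j k : ℕ}

lemma isNilpotent_of_natCast_dvd {x : ZMod (n ^ m)} (hx : (n : ZMod (n ^ m)) ∣ x) :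
    IsNilpotent x := by
  have hn : IsNilpotent (n : ZMod (n ^ m)) := ⟨m, by rw [← Nat.cast_pow, ZMod.natCast_self]⟩
  obtain ⟨y, rfl⟩ := hx
  exact (Commute.all _ _).isNilpotent_mul_right hn

lemma isUnit_of_natCast_dvd_sub {x y : ZMod (n ^ m)} (hx : IsUnit x)
    (h : (n : ZMod (n ^ m)) ∣ y - x) : IsUnit y := by
  simpa using (isNilpotent_of_natCast_dvd h).isUnit_add_left_of_commute hx (Commute.all _ _)

/-- The cyclic subgroup of `ℤ/n^m ⊕ ℤ/n^r` generated by `(n^(m-i), n^(r-j))`; for `n = p` prime,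
`i = 2` and `j = 1` it is the subgroup of the bipicket `T_2^{m,r}`. The differences are truncated,
so this is meaningful for `i ≤ m` and `j ≤ r` only. -/
abbrev bipicketSubgroup (n m r i j : ℕ) : AddSubgroup (ZMod (n ^ m) × ZMod (n ^ r)) :=
  .zmultiples ((n : ZMod (n ^ m)) ^ (m - i), (n : ZMod (n ^ r)) ^ (r - j))

variable [NeZero n]

lemma pow_sub_dvd_iff_pow_mul_eq_zero (hk : k ≤ m) {x : ZMod (n ^ m)} :
    (n : ZMod (n ^ m)) ^ (m - k) ∣ x ↔ (n : ZMod (n ^ m)) ^ k * x = 0 := by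
  have h := natCast_dvd_iff_mul_eq_zero (pow_sub_mul_pow n hk) (x := x)
  push_cast at h
  exact h

lemma pow_sub_dvd_map {N : ℕ} (hk : k ≤ m) (β : ZMod N →+ ZMod (n ^ m)) {y : ZMod N}
    (hy : (n : ZMod N) ^ k * y = 0) : (n : ZMod (n ^ m)) ^ (m - k) ∣ β y := by
  rw [pow_sub_dvd_iff_pow_mul_eq_zero hk]
  have h := map_nsmul β (n ^ k) y
  rwa [nsmul_eq_mul, nsmul_eq_mul, Nat.cast_pow, Nat.cast_pow, hy, map_zero, eq_comm] at h

lemma isNilpotent_addMonoidHom_apply (hrm : r < m) (β : ZMod (n ^ r) →+ ZMod (n ^ m))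
    (y : ZMod (n ^ r)) : IsNilpotent (β y) := by
  refine isNilpotent_of_natCast_dvd ((dvd_pow_self _ (Nat.sub_ne_zero_of_lt hrm)).trans ?_)
  exact pow_sub_dvd_map hrm.le β (by rw [← Nat.cast_pow, ZMod.natCast_self, zero_mul])

lemma mul_pow_sub_eq_mul_pow_sub_iff (hk : k ≤ m) {x y : ZMod (n ^ m)} :
    x * (n : ZMod (n ^ m)) ^ (m - k) = y * n ^ (m - k) ↔ (n : ZMod (n ^ m)) ^ k ∣ x - y := by
  have h := pow_sub_dvd_iff_pow_mul_eq_zero (n := n) (Nat.sub_le m k) (x := x - y)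
  rw [Nat.sub_sub_self hk] at h
  rw [h, ← sub_eq_zero, ← sub_mul, mul_comm]

lemma mul_mem_bipicketSubgroup_iff (hji : j ≤ i) (him : i ≤ m) (hjr : j ≤ r) (hrm : r ≤ m)
    (b : ZMod (n ^ m)) (d : ZMod (n ^ r)) :
    (b * n ^ (m - i), d * n ^ (r - j)) ∈ bipicketSubgroup n m r i j ↔
      (n : ZMod (n ^ r)) ^ j ∣ d - b.cast := by
  simp only [AddSubgroup.mem_zmultiples_iff, Prod.smul_mk, zsmul_eq_mul, Prod.mk.injEq,
    mul_pow_sub_eq_mul_pow_sub_iff him, mul_pow_sub_eq_mul_pow_sub_iff hjr]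
  constructor
  · rintro ⟨t, htb, htd⟩
    have htb' := map_dvd (ZMod.castHom (pow_dvd_pow n hrm) (ZMod (n ^ r))) htb
    rw [map_pow, map_natCast, map_sub, map_intCast, ZMod.castHom_apply] at htb'
    simpa using dvd_sub ((pow_dvd_pow _ hji).trans htb') htd
  · intro h
    refine ⟨b.cast, by simp, ?_⟩
    rwa [ZMod.intCast_cast, dvd_sub_comm]

lemma exists_blockHom_generator_eq (hji : 2 * j ≤ i) (hjr : j ≤ r) (him : r + i ≤ m)
    (a : ZMod (n ^ m)) (β : ZMod (n ^ r) →+ ZMod (n ^ m)) (γ : ZMod (n ^ m) →+ ZMod (n ^ r))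
    (d : ZMod (n ^ r)) :
    ∃ z, blockHom a β γ d (n ^ (m - i), n ^ (r - j)) =
      ((a + n ^ j * z) * n ^ (m - i), d * n ^ (r - j)) := by
  have hγ : γ (n ^ (m - i)) = 0 := by
    have h := map_nsmul γ (n ^ (m - i)) 1
    rw [nsmul_one, Nat.cast_pow] at h
    rw [h, nsmul_eq_mul, (ZMod.natCast_eq_zero_iff _ _).mpr (pow_dvd_pow n (by omega)), zero_mul]
  have hβ : (n : ZMod (n ^ m)) ^ (m - j) ∣ β (n ^ (r - j)) := by
    refine pow_sub_dvd_map (by omega) β ?_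
    rw [← pow_add, Nat.add_sub_cancel' hjr, ← Nat.cast_pow, ZMod.natCast_self]
  obtain ⟨z, hz⟩ := (pow_dvd_pow (n : ZMod (n ^ m)) (show j + (m - i) ≤ m - j by omega)).trans hβ
  refine ⟨z, ?_⟩
  rw [blockHom_apply, hγ, zero_add, hz]
  ring_nf

lemma blockHom_generator_mem_bipicketSubgroup_iff (hji : 2 * j ≤ i) (hjr : j ≤ r) (him : r + i ≤ m)
    (a : ZMod (n ^ m)) (β : ZMod (n ^ r) →+ ZMod (n ^ m)) (γ : ZMod (n ^ m) →+ ZMod (n ^ r))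
    (d : ZMod (n ^ r)) :
    blockHom a β γ d (n ^ (m - i), n ^ (r - j)) ∈ bipicketSubgroup n m r i j ↔
      (n : ZMod (n ^ r)) ^ j ∣ d - a.cast := by
  obtain ⟨z, hz⟩ := exists_blockHom_generator_eq hji hjr him a β γ d
  have hrm : n ^ r ∣ n ^ m := pow_dvd_pow n (by omega)
  rw [hz, mul_mem_bipicketSubgroup_iff (by omega) (by omega) hjr (by omega), ZMod.cast_add hrm,
    ZMod.cast_mul hrm, ZMod.cast_pow hrm, ZMod.cast_natCast hrm, ← sub_sub]
  exact dvd_sub_left (dvd_mul_right _ _)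

lemma bijective_blockHom_and_map_eq_self_iff (hj : 1 ≤ j) (hji : 2 * j ≤ i) (hjr : j ≤ r)
    (him : r + i ≤ m) (a : ZMod (n ^ m)) (β : ZMod (n ^ r) →+ ZMod (n ^ m))
    (γ : ZMod (n ^ m) →+ ZMod (n ^ r)) (d : ZMod (n ^ r)) :
    Function.Bijective (blockHom a β γ d) ∧
        (bipicketSubgroup n m r i j).map (blockHom a β γ d) = bipicketSubgroup n m r i j ↔
      IsUnit a ∧ (n : ZMod (n ^ r)) ^ j ∣ d - a.cast := by
  have hβ := isNilpotent_addMonoidHom_apply (n := n) (show r < m by omega) β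
  rw [← blockHom_generator_mem_bipicketSubgroup_iff hji hjr him a β γ d]
  constructor
  · rintro ⟨hbij, hmap⟩
    exact ⟨isUnit_of_surjective_blockHom hβ hbij.2,
      (map_zmultiples_eq_self_iff hbij.1 _).mp hmap⟩
  · rintro ⟨ha, hmem⟩
    have had : (n : ZMod (n ^ r)) ∣ d - a.cast :=
      (dvd_pow_self _ (by omega)).trans
        ((blockHom_generator_mem_bipicketSubgroup_iff hji hjr him a β γ d).mp hmem)
    have ha' : IsUnit (a.cast : ZMod (n ^ r)) :=
      ha.map (ZMod.castHom (pow_dvd_pow n (by omega : r ≤ m)) (ZMod (n ^ r)))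
    have hbij := bijective_blockHom (γ := γ) hβ ha (isUnit_of_natCast_dvd_sub ha' had)
    exact ⟨hbij, (map_zmultiples_eq_self_iff hbij.1 _).mpr hmem⟩

lemma card_isUnit_and_pow_dvd_sub (hm : m ≠ 0) (hjr : j ≤ r) :
    Nat.card {x : ZMod (n ^ m) × ZMod (n ^ r) //
      IsUnit x.1 ∧ (n : ZMod (n ^ r)) ^ j ∣ x.2 - x.1.cast} =
      n.totient * n ^ (m - 1 + (r - j)) := by
  obtain ⟨m, rfl⟩ := Nat.exists_eq_succ_of_ne_zero hm
  have h := card_natCast_dvd (n ^ r) (n ^ j)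
  rw [Nat.gcd_eq_right (pow_dvd_pow n hjr), Nat.pow_div hjr (NeZero.pos n), Nat.cast_pow] at h
  rw [card_prod_and_dvd_sub IsUnit ZMod.cast, card_isUnit_zmod, totient_pow_succ, h,
    Nat.succ_sub_one, pow_add]
  ring

lemma card_stabilizer_bipicketSubgroup (hj : 1 ≤ j) (hji : 2 * j ≤ i) (hjr : j ≤ r)
    (him : r + i ≤ m) :
    Nat.card {φ : (ZMod (n ^ m) × ZMod (n ^ r)) ≃+ (ZMod (n ^ m) × ZMod (n ^ r)) //
        (bipicketSubgroup n m r i j).map φ.toAddMonoidHom = bipicketSubgroup n m r i j} =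
      Nat.card {x : ZMod (n ^ m) × ZMod (n ^ r) //
        IsUnit x.1 ∧ (n : ZMod (n ^ r)) ^ j ∣ x.2 - x.1.cast} *
      (Nat.card (ZMod (n ^ r) →+ ZMod (n ^ m)) * Nat.card (ZMod (n ^ m) →+ ZMod (n ^ r))) := by
  rw [card_addEquiv_map_eq_self, ← Nat.card_prod, ← Nat.card_prod]
  refine Nat.card_congr (.trans (.symm ?_) Equiv.prodSubtypeFstEquivSubtypeProd)
  exact (blockHomEquiv _ _).subtypeEquiv fun x =>
    (bijective_blockHom_and_map_eq_self_iff hj hji hjr him x.1.1 x.2.1 x.2.2 x.1.2).symm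

end PowerModulus

theorem stmt_4_general {n m r i j : ℕ} [NeZero n] (hj : 1 ≤ j) (hji : 2 * j ≤ i) (hjr : j ≤ r)
    (him : r + i ≤ m) :
    Nat.card {φ : (ZMod (n ^ m) × ZMod (n ^ r)) ≃+ (ZMod (n ^ m) × ZMod (n ^ r)) //
        (bipicketSubgroup n m r i j).map φ.toAddMonoidHom = bipicketSubgroup n m r i j} =
      n.totient * n ^ (m + 3 * r - (j + 1)) := by
  have hrm : n ^ r ∣ n ^ m := pow_dvd_pow n (by omega)
  rw [card_stabilizer_bipicketSubgroup hj hji hjr him, card_isUnit_and_pow_dvd_sub (by omega) hjr,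
    card_zmod_addMonoidHom_s4, card_zmod_addMonoidHom_s4, Nat.card_zmod, Nat.card_zmod,
    Nat.gcd_eq_right hrm, Nat.gcd_eq_left hrm, mul_assoc, ← pow_add, ← pow_add]
  congr 2
  omega

/-- The number of automorphisms of the bipicket pair `T_2^{m,r}`, i.e. automorphisms `φ` of
`B = ℤ/p^m ⊕ ℤ/p^r` with `φ(A) = A` where `A = ⟨(p^{m-2}, p^{r-1})⟩`, equals
`(p-1)·p^{m+3r-2}`. -/
theorem stmt_4 (p : ℕ) (hp : p.Prime) (m r : ℕ) (h1 : 1 ≤ r) (h2 : r + 2 ≤ m) :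
    Nat.card {φ : (ZMod (p ^ m) × ZMod (p ^ r)) ≃+ (ZMod (p ^ m) × ZMod (p ^ r)) //
        (AddSubgroup.zmultiples
            ((p : ZMod (p ^ m)) ^ (m - 2), (p : ZMod (p ^ r)) ^ (r - 1))).map
            φ.toAddMonoidHom =
          AddSubgroup.zmultiples
            ((p : ZMod (p ^ m)) ^ (m - 2), (p : ZMod (p ^ r)) ^ (r - 1))} =
      (p - 1) * p ^ (m + 3 * r - 2) := by
  have : NeZero p := ⟨hp.ne_zero⟩
  rw [← Nat.totient_prime hp]
  exact stmt_4_general le_rfl le_rfl h1 h2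
end

section
/- Let p be a prime and let 1 ≤ r ≤ m−2 and 0 ≤ s ≤ r−1 be integers. Set B = ℤ/p^mℤ ⊕ ℤ/p^rℤ and let A be the cyclic subgroup generated by (p^{m−2}, p^{r−1}). Then {b ∈ B : p^s b ∈ A} is the subgroup of B generated by the two elements (p^{m−2−s}, p^{r−1−s}) and (0, p^{r−s}), and this subgroup is isomorphic to ℤ/p^{2+s}ℤ ⊕ ℤ/p^sℤ (where ℤ/p⁰ℤ is the trivial group). -/
/-!
The preimage under multiplication by `n` of the cyclic group generated by `n • x` is
`⟨x⟩ + ker n`. Take `x = (u, v)` in `ℤ/ncu ⊕ ℤ/ndv` with `d ∣ c`, and let `y = (0, dv)`. The kernel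
of `n` is generated by `(cu, 0)` and `y`, and `(cu, 0) = c x - (c / d) y`, so the preimage is
`⟨x⟩ + ⟨y⟩`. This sum is direct: if the first coordinate of `k x` vanishes then `nc ∣ k`, hence
`k x = 0` because `nd ∣ nc`. Here `x` has order `nc` and `y` has order `n`. The theorem is the case
`n = p ^ s`, `c = p ^ 2`, `d = p`, `u = p ^ (m - 2 - s)`, `v = p ^ (r - 1 - s)`.
-/

open AddSubgroup

section AddGroup

variable {G H : Type*} [AddGroup G] [AddGroup H]

theorem closure_pair_eq_zmultiples_sup_zmultiples (x y : G) :
    AddSubgroup.closure {x, y} = zmultiples x ⊔ zmultiples y := by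
  rw [Set.insert_eq, AddSubgroup.closure_union, ← zmultiples_eq_closure, ← zmultiples_eq_closure]

theorem disjoint_zmultiples_zmultiples_zero_prod {x : G × H}
    (hx : addOrderOf x.2 ∣ addOrderOf x.1) (h : H) :
    Disjoint (zmultiples x) (zmultiples ((0, h) : G × H)) := by
  refine disjoint_def.2 ?_
  rintro _ ⟨k, rfl⟩ ⟨l, hl⟩
  have hfst : k • x.1 = 0 := by simpa using (congrArg Prod.fst hl).symm
  have horder : (addOrderOf x.1 : ℤ) ∣ k := addOrderOf_dvd_iff_zsmul_eq_zero.2 hfst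
  have hsnd : k • x.2 = 0 :=
    addOrderOf_dvd_iff_zsmul_eq_zero.1 ((Int.natCast_dvd_natCast.2 hx).trans horder)
  exact Prod.ext hfst hsnd

/-- A cyclic group `⟨x⟩`, identified with `ℤ` modulo the order of `x` (with `ZMod 0 = ℤ` when that
order is infinite). -/
noncomputable def zmultiplesAddEquivZMod (x : G) : zmultiples x ≃+ ZMod (addOrderOf x) :=
  (zmodAddCyclicAddEquiv inferInstance).symm.trans
    (ZMod.ringEquivCongr (Nat.card_zmultiples x)).toAddEquiv

end AddGroup

section AddCommGroup

variable {G : Type*} [AddCommGroup G]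

theorem comap_nsmul_zmultiples_nsmul (n : ℕ) (x : G) :
    (zmultiples (n • x)).comap (nsmulAddMonoidHom n) =
      zmultiples x ⊔ (nsmulAddMonoidHom n).ker := by
  rw [← comap_map_eq, AddMonoidHom.map_zmultiples, nsmulAddMonoidHom_apply]

/-- The internal direct sum `K ⊔ L` of two disjoint subgroups, identified with the external
one by addition. -/
noncomputable def prodAddEquivSup {K L : AddSubgroup G} (h : Disjoint K L) :
    K × L ≃+ (K ⊔ L : AddSubgroup G) :=
  AddEquiv.ofBijective
    ((inclusion (le_sup_left : K ≤ K ⊔ L)).coprod (inclusion (le_sup_right : L ≤ K ⊔ L)))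
    ⟨fun _ _ hab => add_injective_of_disjoint h (congrArg Subtype.val hab), fun ⟨_, hz⟩ =>
      let ⟨a, b, hab⟩ := mem_sup'.1 hz
      ⟨(a, b), Subtype.ext hab⟩⟩

theorem nonempty_zmultiples_sup_addEquiv {x y : G} (h : Disjoint (zmultiples x) (zmultiples y)) :
    Nonempty ((zmultiples x ⊔ zmultiples y : AddSubgroup G) ≃+
      ZMod (addOrderOf x) × ZMod (addOrderOf y)) :=
  ⟨(prodAddEquivSup h).symm.trans
    ((zmultiplesAddEquivZMod x).prodCongr (zmultiplesAddEquivZMod y))⟩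

end AddCommGroup

section ZMod

variable {M N n c d u v : ℕ}

theorem addOrderOf_natCast_zmod_of_eq_mul (hu : u ≠ 0) (hN : N = n * u) :
    addOrderOf (u : ZMod N) = n := by
  rw [hN, ZMod.addOrderOf_coe' _ hu, Nat.gcd_mul_left_left, Nat.mul_div_cancel _ hu.pos]

theorem ker_nsmul_zmod {k : ℕ} (hN : N = n * k) (hn : n ≠ 0) :
    (nsmulAddMonoidHom n : ZMod N →+ ZMod N).ker = zmultiples (k : ZMod N) := by
  ext z
  obtain ⟨a, rfl⟩ := ZMod.intCast_surjective z
  have hker : n • (a : ZMod N) = 0 ↔ (k : ℤ) ∣ a := by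
    rw [nsmul_eq_mul, ← Int.cast_natCast, ← Int.cast_mul, ZMod.intCast_zmod_eq_zero_iff_dvd, hN,
      Nat.cast_mul, mul_dvd_mul_iff_left (Nat.cast_ne_zero.2 hn)]
  rw [AddMonoidHom.mem_ker, nsmulAddMonoidHom_apply, mem_zmultiples_iff]
  constructor
  · intro ha
    obtain ⟨b, rfl⟩ := hker.1 ha
    exact ⟨b, by rw [zsmul_eq_mul, Int.cast_mul, Int.cast_natCast, mul_comm]⟩
  · rintro ⟨b, hb⟩
    rw [← hb, smul_comm, nsmul_eq_mul, ← Nat.cast_mul, ← hN, ZMod.natCast_self, smul_zero]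

theorem comap_nsmul_zmultiples_zmod_prod (hM : M = n * c * u) (hN : N = n * d * v)
    (hn : n ≠ 0) (hdc : d ∣ c) :
    (zmultiples (n • ((u, v) : ZMod M × ZMod N))).comap (nsmulAddMonoidHom n) =
      zmultiples ((u, v) : ZMod M × ZMod N) ⊔ zmultiples (0, ((d * v : ℕ) : ZMod N)) := by
  obtain ⟨e, rfl⟩ := hdc
  rw [mul_assoc] at hM hN
  set x : ZMod M × ZMod N := (u, v)
  set y : ZMod M × ZMod N := (0, (d * v : ℕ))
  have hx : x ∈ zmultiples x ⊔ zmultiples y := mem_sup_left (mem_zmultiples x)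
  have hy : y ∈ zmultiples x ⊔ zmultiples y := mem_sup_right (mem_zmultiples y)
  have hker_le : (nsmulAddMonoidHom n : ZMod M × ZMod N →+ _).ker ≤
      zmultiples x ⊔ zmultiples y := by
    rintro ⟨a, b⟩ hab
    have ha : a ∈ (nsmulAddMonoidHom n).ker := congrArg Prod.fst hab
    have hb : b ∈ (nsmulAddMonoidHom n).ker := congrArg Prod.snd hab
    rw [ker_nsmul_zmod hM hn] at ha
    rw [ker_nsmul_zmod hN hn] at hb
    obtain ⟨k, rfl⟩ := ha
    obtain ⟨l, rfl⟩ := hb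
    have hcomb : (k • ((d * e * u : ℕ) : ZMod M), l • ((d * v : ℕ) : ZMod N)) =
        k • ((d * e) • x - e • y) + l • y := by
      ext <;> simp [x, y, mul_assoc, mul_left_comm]
    exact hcomb ▸ add_mem (zsmul_mem (sub_mem (nsmul_mem hx _) (nsmul_mem hy _)) _) (zsmul_mem hy _)
  have hy_ker : y ∈ (nsmulAddMonoidHom n).ker :=
    Prod.ext (smul_zero n) ((ker_nsmul_zmod hN hn).ge (mem_zmultiples _))
  rw [comap_nsmul_zmultiples_nsmul]
  exact le_antisymm (sup_le le_sup_left hker_le)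
    (sup_le_sup_left (zmultiples_le_of_mem hy_ker) _)

theorem nonempty_zmultiples_sup_zmod_prod_addEquiv (hM : M = n * c * u) (hN : N = n * d * v)
    (hdc : d ∣ c) (hd : d ≠ 0) (hu : u ≠ 0) (hv : v ≠ 0) :
    Nonempty ((zmultiples ((u, v) : ZMod M × ZMod N) ⊔
        zmultiples (0, ((d * v : ℕ) : ZMod N)) : AddSubgroup _) ≃+ ZMod (n * c) × ZMod n) := by
  have order_u : addOrderOf (u : ZMod M) = n * c :=
    addOrderOf_natCast_zmod_of_eq_mul hu hM
  have order_v : addOrderOf (v : ZMod N) = n * d :=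
    addOrderOf_natCast_zmod_of_eq_mul hv hN
  have order_dv : addOrderOf ((d * v : ℕ) : ZMod N) = n :=
    addOrderOf_natCast_zmod_of_eq_mul (mul_ne_zero hd hv) (hN.trans (mul_assoc n d v))
  have order_dvd : addOrderOf (v : ZMod N) ∣ addOrderOf (u : ZMod M) := by
    rw [order_u, order_v]
    exact mul_dvd_mul_left n hdc
  have order_uv : addOrderOf ((u, v) : ZMod M × ZMod N) = n * c := by
    rw [Prod.addOrderOf_mk, Nat.lcm_eq_left order_dvd, order_u]
  have order_zero_dv : addOrderOf ((0, (d * v : ℕ)) : ZMod M × ZMod N) = n := by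
    rw [Prod.addOrderOf_mk, addOrderOf_zero, Nat.lcm_one_left, order_dv]
  have hdisj : Disjoint (zmultiples ((u, v) : ZMod M × ZMod N)) (zmultiples (0, (d * v : ℕ))) :=
    disjoint_zmultiples_zmultiples_zero_prod order_dvd _
  have hiso := nonempty_zmultiples_sup_addEquiv hdisj
  rwa [order_uv, order_zero_dv] at hiso

end ZMod

theorem stmt_13_general {p m r s i j : ℕ} (hp : p ≠ 0) (hji : j ≤ i) (hm : i + s ≤ m)
    (hr : j + s ≤ r) (S : AddSubgroup (ZMod (p ^ m) × ZMod (p ^ r)))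
    (hS : S = (zmultiples ((p : ZMod (p ^ m)) ^ (m - i), (p : ZMod (p ^ r)) ^ (r - j))).comap
      (nsmulAddMonoidHom (p ^ s))) :
    S = AddSubgroup.closure
        {((p : ZMod (p ^ m)) ^ (m - i - s), (p : ZMod (p ^ r)) ^ (r - j - s)),
          ((0 : ZMod (p ^ m)), (p : ZMod (p ^ r)) ^ (r - s))} ∧
      Nonempty (S ≃+ ZMod (p ^ (i + s)) × ZMod (p ^ s)) := by
  obtain ⟨t, rfl⟩ := Nat.exists_eq_add_of_le hm
  obtain ⟨q, rfl⟩ := Nat.exists_eq_add_of_le hr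
  have hdvd : p ^ j ∣ p ^ i := pow_dvd_pow p hji
  have hlift := comap_nsmul_zmultiples_zmod_prod (M := p ^ (i + s + t)) (N := p ^ (j + s + q))
    (by ring) (by ring) (pow_ne_zero s hp) hdvd (u := p ^ t) (v := p ^ q)
  have hiso := nonempty_zmultiples_sup_zmod_prod_addEquiv (n := p ^ s) (M := p ^ (i + s + t))
    (N := p ^ (j + s + q)) (by ring) (by ring) hdvd (pow_ne_zero j hp) (pow_ne_zero t hp)
    (pow_ne_zero q hp)
  have hgen :
      p ^ s • (((p ^ t : ℕ) : ZMod (p ^ (i + s + t))), ((p ^ q : ℕ) : ZMod (p ^ (j + s + q)))) =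
        ((p : ZMod _) ^ (s + t), (p : ZMod _) ^ (s + q)) := by
    simp [pow_add]
  rw [← hlift, hgen, ← pow_add, add_comm s i] at hiso
  rw [hgen, ← closure_pair_eq_zmultiples_sup_zmultiples, ← pow_add] at hlift
  have hexp_m : i + s + t - i = s + t := by lia
  have hexp_r : j + s + q - j = s + q := by lia
  have hexp_y : j + s + q - s = j + q := by lia
  rw [hexp_m, hexp_r] at hS ⊢
  rw [hexp_y, add_tsub_cancel_left, add_tsub_cancel_left, hS]
  exact ⟨by simpa only [Nat.cast_pow] using hlift, hiso⟩

/-- For `0 ≤ s ≤ r-1`, lifting the bipicket `T_2^{m,r}` `s` times: the subgroup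
`{b ∈ ℤ/p^m ⊕ ℤ/p^r : p^s b ∈ ⟨(p^{m-2}, p^{r-1})⟩}` is generated by
`(p^{m-2-s}, p^{r-1-s})` and `(0, p^{r-s})`, and is isomorphic to
`ℤ/p^{2+s} ⊕ ℤ/p^s` (with `ℤ/p⁰` the trivial group). -/
theorem stmt_13 (p : ℕ) (hp : p.Prime) (m r s : ℕ) (h1 : 1 ≤ r) (h2 : r + 2 ≤ m)
    (hs : s + 1 ≤ r)
    (S : AddSubgroup (ZMod (p ^ m) × ZMod (p ^ r)))
    (hS : S = (AddSubgroup.zmultiples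
        ((p : ZMod (p ^ m)) ^ (m - 2), (p : ZMod (p ^ r)) ^ (r - 1))).comap
        (AddMonoidHom.mk' (fun b => p ^ s • b) fun x y => smul_add (p ^ s) x y)) :
    S = AddSubgroup.closure
        {((p : ZMod (p ^ m)) ^ (m - 2 - s), (p : ZMod (p ^ r)) ^ (r - 1 - s)),
         ((0 : ZMod (p ^ m)), (p : ZMod (p ^ r)) ^ (r - s))} ∧
      Nonempty (S ≃+ (ZMod (p ^ (2 + s)) × ZMod (p ^ s))) := by
  exact stmt_13_general hp.ne_zero one_le_two (by lia) (by lia) S hS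
end

section
/- Let p be a prime and let 1 ≤ r ≤ m−2 and s ≥ r be integers. Set B = ℤ/p^mℤ ⊕ ℤ/p^rℤ and let A be the cyclic subgroup generated by (p^{m−2}, p^{r−1}). Then {b ∈ B : p^s b ∈ A} = p^{m−min{1+s, m}}(ℤ/p^mℤ) ⊕ ℤ/p^rℤ. In particular, the lifted pair ({b : p^s b ∈ A} ⊆ B) is the direct sum of the pickets P_{min{1+s,m}}^m and P_r^r. -/
/-!
Since `p ^ s` kills `ℤ/p^r`, a pair `(x, y)` is sent into `⟨(g, h)⟩` exactly when `p ^ s • x` is a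
multiple of `g` by an integer annihilating `h`, i.e. by a multiple of the order of `h`. So `y` is
free, and the condition on `x` is that `p ^ s • x` lies in the subgroup generated by
`addOrderOf h • g`. For powers `g = p ^ a` and `h = p ^ b` this generator is `p ^ (a + (r - b))`,
and dividing by `p ^ s` lowers the exponent by `s`.
-/

open AddSubgroup

theorem comap_nsmul_zmultiples_prodMk {G H : Type*} [AddCommGroup G] [AddCommGroup H] {n : ℕ}
    (hn : ∀ y : H, n • y = 0) (g : G) (h : H) :
    (zmultiples (g, h)).comap (nsmulAddMonoidHom n) =
      ((zmultiples (addOrderOf h • g)).comap (nsmulAddMonoidHom n)).prod ⊤ := by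
  ext ⟨x, y⟩
  simp only [mem_comap, nsmulAddMonoidHom_apply, mem_prod, mem_top, and_true, mem_zmultiples_iff,
    Prod.smul_mk, Prod.mk.injEq, hn, ← addOrderOf_dvd_iff_zsmul_eq_zero]
  constructor
  · rintro ⟨k, hk, j, rfl⟩
    exact ⟨j, by rw [← hk, ← natCast_zsmul, smul_smul, mul_comm]⟩
  · rintro ⟨j, hj⟩
    exact ⟨j * addOrderOf h, by rw [mul_smul, natCast_zsmul, hj], dvd_mul_left _ _⟩

theorem addOrderOf_natCast_pow_zmod {p : ℕ} (hp : p ≠ 0) (r b : ℕ) :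
    addOrderOf ((p : ZMod (p ^ r)) ^ b) = p ^ (r - b) := by
  rw [← Nat.cast_pow, ZMod.addOrderOf_coe _ (pow_ne_zero r hp)]
  rcases le_total b r with hbr | hrb
  · rw [Nat.gcd_eq_right (pow_dvd_pow p hbr), Nat.pow_div hbr (Nat.pos_of_ne_zero hp)]
  · rw [Nat.gcd_eq_left (pow_dvd_pow p hrb), Nat.div_self (Nat.pow_pos (Nat.pos_of_ne_zero hp)),
      Nat.sub_eq_zero_of_le hrb, pow_zero]

theorem intCast_mem_zmultiples_natCast_zmod_iff {n a : ℕ} {z : ℤ} :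
    (z : ZMod n) ∈ zmultiples (a : ZMod n) ↔ (Nat.gcd a n : ℤ) ∣ z := by
  rw [← Int.gcd_natCast_natCast, Int.coe_gcd, gcd_dvd_iff_exists, mem_zmultiples_iff]
  refine exists_congr fun k => ?_
  rw [zsmul_eq_mul, ← Int.cast_natCast a, ← Int.cast_mul, ZMod.intCast_eq_intCast_iff_dvd_sub,
    mul_comm k]
  exact exists_congr fun _ => sub_eq_iff_eq_add'

theorem intCast_mem_zmultiples_pow_zmod_iff {p m c : ℕ} {z : ℤ} :
    (z : ZMod (p ^ m)) ∈ zmultiples ((p : ZMod (p ^ m)) ^ c) ↔ (p : ℤ) ^ min c m ∣ z := by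
  have hgcd : Nat.gcd (p ^ c) (p ^ m) = p ^ min c m := by
    rcases le_total c m with h | h
    · rw [Nat.gcd_eq_left (pow_dvd_pow p h), min_eq_left h]
    · rw [Nat.gcd_eq_right (pow_dvd_pow p h), min_eq_right h]
  rw [← Nat.cast_pow, intCast_mem_zmultiples_natCast_zmod_iff, hgcd, Nat.cast_pow]

theorem pow_dvd_pow_mul_iff {M : Type*} [CommMonoidWithZero M] [IsCancelMulZero M]
    {p x : M} (hp : p ≠ 0) (s t : ℕ) : p ^ t ∣ p ^ s * x ↔ p ^ (t - s) ∣ x := by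
  rcases le_total s t with hst | hts
  · rw [← pow_mul_pow_sub p hst, mul_dvd_mul_iff_left (pow_ne_zero s hp)]
  · simp only [Nat.sub_eq_zero_of_le hts, pow_zero, one_dvd, (pow_dvd_pow p hts).mul_right]

theorem comap_nsmul_zmultiples_pow_zmod {p : ℕ} (hp : p ≠ 0) (m s c : ℕ) :
    (zmultiples ((p : ZMod (p ^ m)) ^ c)).comap (nsmulAddMonoidHom (p ^ s)) =
      zmultiples ((p : ZMod (p ^ m)) ^ (min c m - s)) := by
  ext x
  obtain ⟨z, rfl⟩ := ZMod.intCast_surjective x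
  have hcast : p ^ s • (z : ZMod (p ^ m)) = ((p ^ s * z : ℤ) : ZMod (p ^ m)) := by
    simp only [nsmul_eq_mul, Nat.cast_pow, Int.cast_mul, Int.cast_pow, Int.cast_natCast]
  rw [mem_comap, nsmulAddMonoidHom_apply, hcast, intCast_mem_zmultiples_pow_zmod_iff,
    intCast_mem_zmultiples_pow_zmod_iff, pow_dvd_pow_mul_iff (Nat.cast_ne_zero.mpr hp),
    min_eq_left ((Nat.sub_le _ s).trans (min_le_right c m))]

/-- Truncated subtraction is meant in both places: for `b ≥ r` the second generator is `0`, and for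
large `s` the first factor is all of `ℤ/p^m`. -/
theorem stmt_14_general {p : ℕ} (hp : p ≠ 0) (m a b : ℕ) {r s : ℕ} (hs : r ≤ s) :
    (zmultiples ((p : ZMod (p ^ m)) ^ a, (p : ZMod (p ^ r)) ^ b)).comap
        (nsmulAddMonoidHom (p ^ s)) =
      (zmultiples ((p : ZMod (p ^ m)) ^ (min (a + (r - b)) m - s))).prod ⊤ := by
  have hkill (y : ZMod (p ^ r)) : p ^ s • y = 0 := by
    rw [nsmul_eq_mul, (ZMod.natCast_eq_zero_iff _ _).mpr (pow_dvd_pow p hs), zero_mul]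
  have hgen : addOrderOf ((p : ZMod (p ^ r)) ^ b) • (p : ZMod (p ^ m)) ^ a =
      (p : ZMod (p ^ m)) ^ (a + (r - b)) := by
    rw [addOrderOf_natCast_pow_zmod hp, nsmul_eq_mul, Nat.cast_pow, ← pow_add, add_comm]
  rw [comap_nsmul_zmultiples_prodMk hkill, hgen, comap_nsmul_zmultiples_pow_zmod hp]

/-- For `s ≥ r`, lifting the bipicket `T_2^{m,r}` `s` times yields the direct sum of the
pickets `P_{min{1+s,m}}^m` and `P_r^r`:
`{b ∈ ℤ/p^m ⊕ ℤ/p^r : p^s b ∈ ⟨(p^{m-2}, p^{r-1})⟩} = p^{m-min{1+s,m}}(ℤ/p^m) ⊕ ℤ/p^r`. -/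
theorem stmt_14 (p : ℕ) (hp : p.Prime) (m r s : ℕ) (h1 : 1 ≤ r) (h2 : r + 2 ≤ m)
    (hs : r ≤ s) :
    (AddSubgroup.zmultiples
        ((p : ZMod (p ^ m)) ^ (m - 2), (p : ZMod (p ^ r)) ^ (r - 1))).comap
        (AddMonoidHom.mk' (fun b : ZMod (p ^ m) × ZMod (p ^ r) => p ^ s • b)
          fun x y => smul_add (p ^ s) x y) =
      (AddSubgroup.zmultiples ((p : ZMod (p ^ m)) ^ (m - min (1 + s) m))).prod ⊤ := by
  have hexp : m - min (1 + s) m = min (m - 2 + (r - (r - 1))) m - s := by lia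
  rw [hexp]
  exact stmt_14_general hp.ne_zero m (m - 2) (r - 1) hs
end

section
/- Let p be a prime. Set B = ℤ/p⁴ℤ ⊕ ℤ/p²ℤ ⊕ ℤ/p³ℤ and let A be the subgroup of B generated by the two elements (p², p, 0) and (0, 0, p²). Then the number of group automorphisms φ of B with φ(A) = A equals (p−1)²·p^{20}. -/
/-!
An endomorphism of `B` is a `3 × 3` matrix whose entries are homomorphisms between the cyclic
factors of `B`. As the exponents `4`, `2`, `3` are distinct, one of any two entries opposite each
other across the diagonal is divisible by `p`, so that the matrix is triangular modulo `p` up to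
the order of the factors, and the endomorphism is bijective if and only if the diagonal entries
`a`, `e`, `i` are units. Since `A = {(x, y, z) | p ∣ y, p³ ∣ x - p y, p² ∣ z}`, it maps `A` into `A`
if and only if `e ≡ a` modulo `p`. The entries off the diagonal are unconstrained and contribute
`p¹⁴`; the diagonal contributes `p³(p - 1) · p · p²(p - 1)`.
-/

open Function

theorem injective_of_nsmul_eq_zero_imp {G H : Type*} [AddGroup G] [AddMonoid H] {n : ℕ}
    (hG : ∀ g : G, ∃ k : ℕ, n ^ k • g = 0) (φ : G →+ H)
    (hφ : ∀ g, n • g = 0 → φ g = 0 → g = 0) : Injective φ := by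
  have eq_zero_of_pow (k : ℕ) (g : G) (hg : φ g = 0) (hk : n ^ k • g = 0) : g = 0 := by
    induction k generalizing g with
    | zero => simpa using hk
    | succ k ih =>
      refine hφ g (ih (n • g) ?_ ?_) hg
      · rw [map_nsmul, hg, nsmul_zero]
      · rwa [← mul_nsmul', ← pow_succ]
  refine (injective_iff_map_eq_zero φ).2 fun g hg => ?_
  obtain ⟨k, hk⟩ := hG g
  exact eq_zero_of_pow k g hg hk

theorem addSubgroup_map_eq_iff_le_of_injective {G : Type*} [AddGroup G] {A : AddSubgroup G}
    [Finite A] {φ : G →+ G} (hφ : Injective φ) : A.map φ = A ↔ A.map φ ≤ A :=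
  ⟨le_of_eq, fun h => AddSubgroup.eq_of_le_of_card_ge h (AddSubgroup.card_map_of_injective hφ).ge⟩

/-- Automorphisms of `G` whose underlying endomorphism satisfies `P`, as bijective endomorphisms
satisfying `P`. -/
noncomputable def addAutSubtypeEquiv {G : Type*} [AddGroup G] (P : (G →+ G) → Prop) :
    {φ : G ≃+ G // P φ.toAddMonoidHom} ≃ {φ : G →+ G // Bijective φ ∧ P φ} where
  toFun φ := ⟨φ.1.toAddMonoidHom, φ.1.bijective, φ.2⟩
  invFun φ := ⟨AddEquiv.ofBijective φ.1 φ.2.1, φ.2.2⟩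
  left_inv _ := Subtype.ext (AddEquiv.ext fun _ => rfl)
  right_inv _ := rfl

/-- The universal property of a product of two commutative monoids as their coproduct. -/
def prodAddMonoidHomEquiv (M N P : Type*) [AddCommMonoid M] [AddCommMonoid N] [AddCommMonoid P] :
    (M × N →+ P) ≃ (M →+ P) × (N →+ P) where
  toFun f := (f.comp (.inl M N), f.comp (.inr M N))
  invFun f := f.1.coprod f.2
  left_inv := AddMonoidHom.coprod_unique
  right_inv _ := Prod.ext (AddMonoidHom.coprod_comp_inl _ _) (AddMonoidHom.coprod_comp_inr _ _)

/-- A homomorphism out of `ℤ/n` amounts to the image of `1`, an element killed by `n`. -/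
def zmodAddMonoidHomEquiv (n : ℕ) (G : Type*) [AddCommGroup G] :
    (ZMod n →+ G) ≃ {g : G // n • g = 0} where
  toFun f := ⟨f 1, by rw [← map_nsmul, nsmul_one, ZMod.natCast_self, map_zero]⟩
  invFun g := ZMod.lift n ⟨zmultiplesHom G g.1, by simpa using g.2⟩
  left_inv f := by
    ext x
    obtain ⟨x, rfl⟩ := ZMod.intCast_surjective x
    rw [ZMod.lift_coe, zmultiplesHom_apply, ← map_zsmul, zsmul_one]
  right_inv g := Subtype.ext <| by
    simpa only [Int.cast_one, zmultiplesHom_apply, one_zsmul] using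
      ZMod.lift_coe n ⟨zmultiplesHom G g.1, by simpa using g.2⟩ 1

/-- A homomorphism out of `ℤ/a × ℤ/b × ℤ/c` as the images of the three standard generators. -/
def zmodProdAddMonoidHomEquiv (a b c : ℕ) (G : Type*) [AddCommGroup G] :
    (ZMod a × ZMod b × ZMod c →+ G) ≃
      {g : G // a • g = 0} × {g : G // b • g = 0} × {g : G // c • g = 0} :=
  (prodAddMonoidHomEquiv _ _ _).trans <| (zmodAddMonoidHomEquiv a G).prodCongr <|
    (prodAddMonoidHomEquiv _ _ _).trans <|
      (zmodAddMonoidHomEquiv b G).prodCongr (zmodAddMonoidHomEquiv c G)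

theorem zmod_nsmul_eq_zero_of_dvd {m n : ℕ} (h : n ∣ m) (x : ZMod n) : m • x = 0 := by
  rw [nsmul_eq_mul, (ZMod.natCast_eq_zero_iff m n).2 h, zero_mul]

theorem card_zmod_nsmul_eq_zero {m n : ℕ} [NeZero n] (h : m ∣ n) :
    Nat.card {x : ZMod n // m • x = 0} = m := by
  have card_ker := IsAddCyclic.card_nsmulAddMonoidHom_ker (G := ZMod n) m
  rwa [Nat.card_zmod, Nat.gcd_eq_right h] at card_ker

theorem card_zmod_isUnit (n : ℕ) [NeZero n] : Nat.card {x : ZMod n // IsUnit x} = n.totient := by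
  rw [← ZMod.card_units_eq_totient, ← Nat.card_eq_fintype_card]
  exact Nat.card_congr (Submonoid.unitsTypeEquivIsUnitSubmonoid (M := ZMod n)).symm.toEquiv

theorem zmod_pow_intCast_eq_zero_iff (p k : ℕ) (x : ℤ) :
    (x : ZMod (p ^ k)) = 0 ↔ (p : ℤ) ^ k ∣ x := by
  rw [ZMod.intCast_zmod_eq_zero_iff_dvd, Nat.cast_pow]

theorem zmod_pow_isUnit_intCast_iff {p k : ℕ} [Fact p.Prime] (hk : k ≠ 0) (x : ℤ) :
    IsUnit (x : ZMod (p ^ k)) ↔ ¬ (p : ℤ) ∣ x := by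
  rw [ZMod.coe_int_isUnit_iff_isCoprime, Nat.cast_pow, IsCoprime.pow_left_iff hk.pos,
    (Nat.prime_iff_prime_int.mp Fact.out).coprime_iff_not_dvd]

theorem zmod_pow_succ_nsmul_intCast_eq_zero_iff {p : ℕ} [NeZero p] (k : ℕ) (x : ℤ) :
    p • (x : ZMod (p ^ (k + 1))) = 0 ↔ (p : ℤ) ^ k ∣ x := by
  have hp : (p : ℤ) ≠ 0 := NeZero.ne _
  rw [nsmul_eq_mul, ← Int.cast_natCast, ← Int.cast_mul, zmod_pow_intCast_eq_zero_iff, pow_succ',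
    mul_dvd_mul_iff_left hp]

/-- The ambient group `B` of the pair `T_2^{4,2} ⊕ P_1^3`. -/
abbrev PicketSum (p : ℕ) : Type := ZMod (p ^ 4) × ZMod (p ^ 2) × ZMod (p ^ 3)

namespace PicketSum

/-- The subgroup `A` of `B` in the pair `T_2^{4,2} ⊕ P_1^3`. -/
abbrev subgroup (p : ℕ) : AddSubgroup (PicketSum p) :=
  AddSubgroup.closure {((p : ZMod (p ^ 4)) ^ 2, (p : ZMod (p ^ 2)), (0 : ZMod (p ^ 3))),
    ((0 : ZMod (p ^ 4)), (0 : ZMod (p ^ 2)), (p : ZMod (p ^ 3)) ^ 2)}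

/-- The class in `B` of a vector of integers. -/
def ofInt (p : ℕ) (x y z : ℤ) : PicketSum p := (x, y, z)

theorem exists_eq_ofInt {p : ℕ} (w : PicketSum p) : ∃ x y z, w = ofInt p x y z := by
  obtain ⟨x, y, z⟩ := w
  obtain ⟨x, rfl⟩ := ZMod.intCast_surjective x
  obtain ⟨y, rfl⟩ := ZMod.intCast_surjective y
  obtain ⟨z, rfl⟩ := ZMod.intCast_surjective z
  exact ⟨x, y, z, rfl⟩

theorem ofInt_add (p : ℕ) (x y z x' y' z' : ℤ) :
    ofInt p x y z + ofInt p x' y' z' = ofInt p (x + x') (y + y') (z + z') := by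
  simp [ofInt]

theorem zsmul_ofInt (p : ℕ) (n x y z : ℤ) :
    n • ofInt p x y z = ofInt p (n * x) (n * y) (n * z) := by
  simp [ofInt]

theorem ofInt_eq_ofInt_iff {p : ℕ} {x y z x' y' z' : ℤ} :
    ofInt p x y z = ofInt p x' y' z' ↔
      (p : ℤ) ^ 4 ∣ x - x' ∧ (p : ℤ) ^ 2 ∣ y - y' ∧ (p : ℤ) ^ 3 ∣ z - z' := by
  simp only [ofInt, Prod.mk.injEq, ← zmod_pow_intCast_eq_zero_iff, Int.cast_sub, sub_eq_zero]

theorem ofInt_eq_zero_iff {p : ℕ} {x y z : ℤ} :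
    ofInt p x y z = 0 ↔ (p : ℤ) ^ 4 ∣ x ∧ (p : ℤ) ^ 2 ∣ y ∧ (p : ℤ) ^ 3 ∣ z := by
  simp only [ofInt, Prod.mk_eq_zero, zmod_pow_intCast_eq_zero_iff]

theorem pow_four_nsmul_eq_zero {p : ℕ} (w : PicketSum p) : p ^ 4 • w = 0 := by
  have nsmul_eq_zero {k : ℕ} (hk : k ≤ 4) (x : ZMod (p ^ k)) : p ^ 4 • x = 0 :=
    zmod_nsmul_eq_zero_of_dvd (pow_dvd_pow p hk) x
  exact Prod.ext (nsmul_eq_zero (by norm_num) _) (Prod.ext (nsmul_eq_zero (by norm_num) _)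
    (nsmul_eq_zero (by norm_num) _))

theorem subgroup_eq_closure_ofInt (p : ℕ) :
    subgroup p = AddSubgroup.closure {ofInt p (p ^ 2) p 0, ofInt p 0 0 (p ^ 2)} := by
  simp [ofInt]

theorem ofInt_mem_subgroup_iff {p : ℕ} {x y z : ℤ} :
    ofInt p x y z ∈ subgroup p ↔
      (p : ℤ) ∣ y ∧ (p : ℤ) ^ 3 ∣ x - p * y ∧ (p : ℤ) ^ 2 ∣ z := by
  rw [subgroup_eq_closure_ofInt, AddSubgroup.mem_closure_pair]
  simp only [zsmul_ofInt, ofInt_add, ofInt_eq_ofInt_iff]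
  constructor
  · rintro ⟨m, n, ⟨u, hu⟩, ⟨v, hv⟩, ⟨w, hw⟩⟩
    exact ⟨⟨m - p * v, by linear_combination -hv⟩,
      ⟨v - p * u, by linear_combination -hu + p * hv⟩, ⟨n - p * w, by linear_combination -hw⟩⟩
  · rintro ⟨⟨y, rfl⟩, ⟨t, ht⟩, ⟨n, rfl⟩⟩
    exact ⟨y + p * t, n, ⟨0, by linear_combination -ht⟩, ⟨t, by ring⟩, ⟨0, by ring⟩⟩

theorem isUnit_ofInt_iff {p : ℕ} [Fact p.Prime] {x y z : ℤ} :
    IsUnit (ofInt p x y z) ↔ ¬ (p : ℤ) ∣ x ∧ ¬ (p : ℤ) ∣ y ∧ ¬ (p : ℤ) ∣ z := by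
  simp only [ofInt, Prod.isUnit_iff, zmod_pow_isUnit_intCast_iff (p := p) four_ne_zero,
    zmod_pow_isUnit_intCast_iff (p := p) two_ne_zero,
    zmod_pow_isUnit_intCast_iff (p := p) three_ne_zero]

/-- Reduction modulo `p²` on the first factor of `B`, with values in the second factor. -/
abbrev reduceModSq (p : ℕ) : ZMod (p ^ 4) →+* ZMod (p ^ 2) :=
  ZMod.castHom (pow_dvd_pow p (by norm_num)) _

/-- The endomorphism `φ` of `B` is induced by an integer matrix, given by `M` after the powers of
`p` that divide its entries for reasons of order have been taken out. -/
def Represents {p : ℕ} (M : Matrix (Fin 3) (Fin 3) ℤ) (φ : PicketSum p →+ PicketSum p) : Prop :=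
  ∀ x y z : ℤ, φ (ofInt p x y z) = ofInt p (M 0 0 * x + p ^ 2 * M 0 1 * y + p * M 0 2 * z)
    (M 1 0 * x + M 1 1 * y + M 1 2 * z) (M 2 0 * x + p * M 2 1 * y + M 2 2 * z)

/-- The diagonal entries of an endomorphism of `B`, as an element of the ring `B`. -/
def diagonal {p : ℕ} (φ : PicketSum p →+ PicketSum p) : PicketSum p :=
  ((φ (1, 0, 0)).1, (φ (0, 1, 0)).2.1, (φ (0, 0, 1)).2.2)

theorem Represents.diagonal_eq {p : ℕ} {M : Matrix (Fin 3) (Fin 3) ℤ}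
    {φ : PicketSum p →+ PicketSum p} (hφ : Represents M φ) :
    diagonal φ = ofInt p (M 0 0) (M 1 1) (M 2 2) := by
  have hφ₁ := hφ 1 0 0
  have hφ₂ := hφ 0 1 0
  have hφ₃ := hφ 0 0 1
  simp only [ofInt, Int.cast_one, Int.cast_zero, mul_one, mul_zero, add_zero, zero_add]
    at hφ₁ hφ₂ hφ₃
  rw [diagonal, hφ₁, hφ₂, hφ₃, ofInt]

/-- The condition on the diagonal entries `(a, e, i)` of an endomorphism of `B` under which it is
an automorphism of the pair `A ⊆ B`: that `a` and `i` are units, and that `e ≡ a` modulo `p`. The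
congruence is multiplied by `p` so that it can be stated in `ℤ/p²`. -/
def IsPairAutDiagonal {p : ℕ} (u : PicketSum p) : Prop :=
  IsUnit u.1 ∧ p • (u.2.1 - reduceModSq p u.1) = 0 ∧ IsUnit u.2.2

section Endomorphism

variable {p : ℕ} [NeZero p]

theorem exists_represents (φ : PicketSum p →+ PicketSum p) : ∃ M, Represents M φ := by
  have hp : (p : ℤ) ≠ 0 := NeZero.ne _
  obtain ⟨a, b, c, hφ₁⟩ := exists_eq_ofInt (φ (ofInt p 1 0 0))
  obtain ⟨d, e, f, hφ₂⟩ := exists_eq_ofInt (φ (ofInt p 0 1 0))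
  obtain ⟨g, h, i, hφ₃⟩ := exists_eq_ofInt (φ (ofInt p 0 0 1))
  have order₂ : (p : ℤ) ^ 2 • φ (ofInt p 0 1 0) = 0 := by
    rw [← map_zsmul, zsmul_ofInt, ofInt_eq_zero_iff.2 (by simp), map_zero]
  have order₃ : (p : ℤ) ^ 3 • φ (ofInt p 0 0 1) = 0 := by
    rw [← map_zsmul, zsmul_ofInt, ofInt_eq_zero_iff.2 (by simp), map_zero]
  rw [hφ₂, zsmul_ofInt, ofInt_eq_zero_iff] at order₂
  rw [hφ₃, zsmul_ofInt, ofInt_eq_zero_iff] at order₃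
  obtain ⟨d, rfl⟩ : (p : ℤ) ^ 2 ∣ d :=
    (mul_dvd_mul_iff_left (pow_ne_zero 2 hp)).1 (by simpa only [← pow_add] using order₂.1)
  obtain ⟨f, rfl⟩ : (p : ℤ) ∣ f :=
    (mul_dvd_mul_iff_left (pow_ne_zero 2 hp)).1 (by simpa only [← pow_succ] using order₂.2.2)
  obtain ⟨g, rfl⟩ : (p : ℤ) ∣ g :=
    (mul_dvd_mul_iff_left (pow_ne_zero 3 hp)).1 (by simpa only [← pow_succ] using order₃.1)
  refine ⟨!![a, d, g; b, e, h; c, f, i], fun x y z => ?_⟩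
  have decomposition : ofInt p x y z =
      x • ofInt p 1 0 0 + y • ofInt p 0 1 0 + z • ofInt p 0 0 1 := by
    simp only [zsmul_ofInt, ofInt_add, mul_one, mul_zero, add_zero, zero_add]
  rw [decomposition, map_add, map_add, map_zsmul, map_zsmul, map_zsmul, hφ₁, hφ₂, hφ₃]
  simp only [zsmul_ofInt, ofInt_add]
  simp [mul_comm x, mul_comm y, mul_comm z]

theorem map_subgroup_le_iff (φ : PicketSum p →+ PicketSum p) :
    (subgroup p).map φ ≤ subgroup p ↔
      p • ((diagonal φ).2.1 - reduceModSq p (diagonal φ).1) = 0 := by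
  have hp : (p : ℤ) ≠ 0 := NeZero.ne _
  obtain ⟨M, hφ⟩ := exists_represents φ
  have image₂ : φ (ofInt p 0 0 (p ^ 2)) ∈ subgroup p := by
    rw [hφ, ofInt_mem_subgroup_iff]
    exact ⟨⟨p * M 1 2, by ring⟩, ⟨M 0 2 - M 1 2, by ring⟩, ⟨M 2 2, by ring⟩⟩
  have image₁ : φ (ofInt p (p ^ 2) p 0) ∈ subgroup p ↔ (p : ℤ) ∣ M 1 1 - M 0 0 := by
    rw [hφ, ofInt_mem_subgroup_iff]
    constructor
    · rintro ⟨-, ⟨t, ht⟩, -⟩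
      refine ⟨M 0 1 - M 1 0 - t, mul_left_cancel₀ (pow_ne_zero 2 hp) ?_⟩
      linear_combination -ht
    · rintro ⟨t, ht⟩
      exact ⟨⟨p * M 1 0 + M 1 1, by ring⟩,
        ⟨M 0 1 - M 1 0 - t, by linear_combination -(p : ℤ) ^ 2 * ht⟩, ⟨M 2 0 + M 2 1, by ring⟩⟩
  have smul_iff := zmod_pow_succ_nsmul_intCast_eq_zero_iff (p := p) 1 (M 1 1 - M 0 0)
  rw [pow_one] at smul_iff
  rw [hφ.diagonal_eq, ofInt, map_intCast, ← Int.cast_sub, smul_iff, ← image₁,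
    subgroup_eq_closure_ofInt, AddMonoidHom.map_closure, AddSubgroup.closure_le, Set.image_pair,
    Set.insert_subset_iff, Set.singleton_subset_iff, ← subgroup_eq_closure_ofInt]
  exact and_iff_left image₂

end Endomorphism

section Automorphism

variable {p : ℕ} [Fact p.Prime]

theorem isUnit_diagonal_of_leftInverse {φ ψ : PicketSum p →+ PicketSum p}
    (h : LeftInverse ψ φ) : IsUnit (diagonal φ) := by
  have hp : Prime (p : ℤ) := Nat.prime_iff_prime_int.1 Fact.out
  obtain ⟨M, hφ⟩ := exists_represents φ
  obtain ⟨N, hψ⟩ := exists_represents ψ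
  have not_dvd {u v s : ℤ} {k : ℕ} (hk : k ≠ 0) (huv : (p : ℤ) ^ k ∣ v * u + p * s - 1) :
      ¬ (p : ℤ) ∣ u := fun hu => hp.not_dvd_one <| by
    have dvd_sub := (dvd_pow_self (p : ℤ) hk).trans huv
    rwa [dvd_sub_right ((hu.mul_left v).add (dvd_mul_right _ s))] at dvd_sub
  have comp_apply (x y z : ℤ) := h (ofInt p x y z)
  simp only [hφ _ _ _, hψ _ _ _, ofInt_eq_ofInt_iff] at comp_apply
  rw [hφ.diagonal_eq, isUnit_ofInt_iff]
  refine ⟨not_dvd (v := N 0 0) (s := p * N 0 1 * M 1 0 + N 0 2 * M 2 0) four_ne_zero ?_,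
    not_dvd (v := N 1 1) (s := p * N 1 0 * M 0 1 + N 1 2 * M 2 1) two_ne_zero ?_,
    not_dvd (v := N 2 2) (s := N 2 0 * M 0 2 + N 2 1 * M 1 2) three_ne_zero ?_⟩
  · convert (comp_apply 1 0 0).1 using 1
    ring
  · convert (comp_apply 0 1 0).2.1 using 1
    ring
  · convert (comp_apply 0 0 1).2.2 using 1
    ring

theorem injective_of_isUnit_diagonal {φ : PicketSum p →+ PicketSum p}
    (h : IsUnit (diagonal φ)) : Injective φ := by
  have hp : Prime (p : ℤ) := Nat.prime_iff_prime_int.1 Fact.out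
  obtain ⟨M, hφ⟩ := exists_represents φ
  rw [hφ.diagonal_eq, isUnit_ofInt_iff] at h
  refine injective_of_nsmul_eq_zero_imp (fun w => ⟨4, pow_four_nsmul_eq_zero w⟩) φ
    fun w w_socle w_ker => ?_
  obtain ⟨x, y, z, rfl⟩ := exists_eq_ofInt w
  rw [← natCast_zsmul, zsmul_ofInt, ofInt_eq_zero_iff, pow_succ' _ 3, pow_succ' _ 1,
    pow_succ' _ 2, mul_dvd_mul_iff_left hp.ne_zero, mul_dvd_mul_iff_left hp.ne_zero,
    mul_dvd_mul_iff_left hp.ne_zero] at w_socle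
  obtain ⟨⟨x, rfl⟩, ⟨y, rfl⟩, ⟨z, rfl⟩⟩ := w_socle
  rw [hφ, ofInt_eq_zero_iff] at w_ker
  obtain ⟨⟨r, hr⟩, ⟨s, hs⟩, ⟨t, ht⟩⟩ := w_ker
  have hy : (p : ℤ) ∣ y := by
    refine (hp.dvd_or_dvd ⟨s - p * M 1 0 * x - M 1 2 * z, ?_⟩).resolve_left h.2.1
    exact mul_left_cancel₀ hp.ne_zero (by linear_combination hs)
  obtain ⟨y, rfl⟩ := hy
  have hz : (p : ℤ) ∣ z := by
    refine (hp.dvd_or_dvd ⟨t - M 2 0 * x - M 2 1 * y, ?_⟩).resolve_left h.2.2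
    exact mul_left_cancel₀ (pow_ne_zero 2 hp.ne_zero) (by linear_combination ht)
  obtain ⟨z, rfl⟩ := hz
  have hx : (p : ℤ) ∣ x := by
    refine (hp.dvd_or_dvd ⟨r - M 0 1 * y - M 0 2 * z, ?_⟩).resolve_left h.1
    exact mul_left_cancel₀ (pow_ne_zero 3 hp.ne_zero) (by linear_combination hr)
  obtain ⟨x, rfl⟩ := hx
  exact ofInt_eq_zero_iff.2 ⟨⟨x, by ring⟩, ⟨y, by ring⟩, ⟨z, by ring⟩⟩

theorem bijective_iff_isUnit_diagonal (φ : PicketSum p →+ PicketSum p) :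
    Bijective φ ↔ IsUnit (diagonal φ) := by
  refine ⟨fun hφ => ?_, fun h =>
    Finite.injective_iff_bijective.1 (injective_of_isUnit_diagonal h)⟩
  let φ' := AddEquiv.ofBijective φ hφ
  exact isUnit_diagonal_of_leftInverse (φ := φ) (ψ := φ'.symm) φ'.symm_apply_apply

theorem isUnit_and_nsmul_sub_eq_zero_iff (u : PicketSum p) :
    IsUnit u ∧ p • (u.2.1 - reduceModSq p u.1) = 0 ↔ IsPairAutDiagonal u := by
  obtain ⟨a, e, i, rfl⟩ := exists_eq_ofInt u
  have isUnit_middle (h : p • ((e : ZMod (p ^ 2)) - reduceModSq p a) = 0)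
      (ha : IsUnit (a : ZMod (p ^ 4))) : IsUnit (e : ZMod (p ^ 2)) := by
    rw [map_intCast, ← Int.cast_sub, zmod_pow_succ_nsmul_intCast_eq_zero_iff 1, pow_one] at h
    rw [zmod_pow_isUnit_intCast_iff four_ne_zero] at ha
    rwa [zmod_pow_isUnit_intCast_iff two_ne_zero, dvd_iff_dvd_of_dvd_sub h]
  simp only [IsPairAutDiagonal, ofInt, Prod.isUnit_iff]
  tauto

theorem bijective_and_map_subgroup_eq_iff (φ : PicketSum p →+ PicketSum p) :
    Bijective φ ∧ (subgroup p).map φ = subgroup p ↔ IsPairAutDiagonal (diagonal φ) := by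
  rw [← isUnit_and_nsmul_sub_eq_zero_iff, ← map_subgroup_le_iff, ← bijective_iff_isUnit_diagonal]
  exact and_congr_right fun hφ => addSubgroup_map_eq_iff_le_of_injective hφ.injective

end Automorphism

/-- The off-diagonal entries of an endomorphism of `B`, column by column. -/
abbrev OffDiagonal (p : ℕ) : Type :=
  (ZMod (p ^ 2) × ZMod (p ^ 3)) ×
    ({x : ZMod (p ^ 4) // p ^ 2 • x = 0} × {x : ZMod (p ^ 3) // p ^ 2 • x = 0}) ×
    ({x : ZMod (p ^ 4) // p ^ 3 • x = 0} × ZMod (p ^ 2))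

/-- An endomorphism of `B` as the matrix of its entries, split into the diagonal entries and the
off-diagonal ones. -/
def endEquiv (p : ℕ) : (PicketSum p →+ PicketSum p) ≃ PicketSum p × OffDiagonal p :=
  (zmodProdAddMonoidHomEquiv (p ^ 4) (p ^ 2) (p ^ 3) (PicketSum p)).trans
    { toFun := fun ⟨u, v, w⟩ => ((u.1.1, v.1.2.1, w.1.2.2), u.1.2,
        (⟨v.1.1, congrArg (·.1) v.2⟩, ⟨v.1.2.2, congrArg (·.2.2) v.2⟩),
        (⟨w.1.1, congrArg (·.1) w.2⟩, w.1.2.1))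
      invFun := fun ⟨⟨a, e, i⟩, ⟨b, c⟩, ⟨d, f⟩, ⟨g, h⟩⟩ =>
        (⟨(a, b, c), pow_four_nsmul_eq_zero _⟩,
          ⟨(d.1, e, f.1), Prod.ext d.2 (Prod.ext (zmod_nsmul_eq_zero_of_dvd dvd_rfl e) f.2)⟩,
          ⟨(g.1, h, i), Prod.ext g.2 <| Prod.ext
            (zmod_nsmul_eq_zero_of_dvd (pow_dvd_pow p (by norm_num)) h)
            (zmod_nsmul_eq_zero_of_dvd dvd_rfl i)⟩)
      left_inv := fun _ => rfl
      right_inv := fun _ => rfl }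

theorem endEquiv_fst {p : ℕ} (φ : PicketSum p →+ PicketSum p) :
    (endEquiv p φ).1 = diagonal φ :=
  rfl

theorem card_isPairAutDiagonal (p : ℕ) [Fact p.Prime] :
    Nat.card {u : PicketSum p // IsPairAutDiagonal u} = (p - 1) ^ 2 * p ^ 6 := by
  let shear : {u : PicketSum p // IsPairAutDiagonal u} ≃ {a : ZMod (p ^ 4) // IsUnit a} ×
      {t : ZMod (p ^ 2) // p • t = 0} × {i : ZMod (p ^ 3) // IsUnit i} :=
    { toFun := fun u => (⟨u.1.1, u.2.1⟩, ⟨u.1.2.1 - reduceModSq p u.1.1, u.2.2.1⟩,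
        ⟨u.1.2.2, u.2.2.2⟩)
      invFun := fun ⟨a, t, i⟩ => ⟨(a.1, t.1 + reduceModSq p a.1, i.1), a.2,
        by simpa only [add_sub_cancel_right] using t.2, i.2⟩
      left_inv := fun _ => Subtype.ext <| by simp only [sub_add_cancel]
      right_inv := fun _ => by simp only [add_sub_cancel_right] }
  rw [Nat.card_congr shear, Nat.card_prod, Nat.card_prod, card_zmod_isUnit, card_zmod_isUnit,
    card_zmod_nsmul_eq_zero (dvd_pow_self p two_ne_zero), Nat.totient_prime_pow_succ Fact.out,
    Nat.totient_prime_pow_succ Fact.out]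
  ring

theorem card_offDiagonal (p : ℕ) [NeZero p] : Nat.card (OffDiagonal p) = p ^ 14 := by
  have card_torsion {k n : ℕ} (h : k ≤ n) : Nat.card {x : ZMod (p ^ n) // p ^ k • x = 0} = p ^ k :=
    card_zmod_nsmul_eq_zero (pow_dvd_pow p h)
  simp only [OffDiagonal, Nat.card_prod, Nat.card_zmod]
  rw [card_torsion (by norm_num), card_torsion (by norm_num), card_torsion (by norm_num)]
  ring

end PicketSum

/-- The number of automorphisms of the pair `T_2^{4,2} ⊕ P_1^3`, i.e. automorphisms `φ` of
`B = ℤ/p⁴ ⊕ ℤ/p² ⊕ ℤ/p³` with `φ(A) = A` where `A = ⟨(p², p, 0), (0, 0, p²)⟩`, equals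
`(p-1)²·p^20`. -/
theorem stmt_15 (p : ℕ) (hp : p.Prime) :
    Nat.card {φ : (ZMod (p ^ 4) × ZMod (p ^ 2) × ZMod (p ^ 3)) ≃+
        (ZMod (p ^ 4) × ZMod (p ^ 2) × ZMod (p ^ 3)) //
      (AddSubgroup.closure
          {((p : ZMod (p ^ 4)) ^ 2, (p : ZMod (p ^ 2)), (0 : ZMod (p ^ 3))),
           ((0 : ZMod (p ^ 4)), (0 : ZMod (p ^ 2)), (p : ZMod (p ^ 3)) ^ 2)}).map
          φ.toAddMonoidHom =
        AddSubgroup.closure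
          {((p : ZMod (p ^ 4)) ^ 2, (p : ZMod (p ^ 2)), (0 : ZMod (p ^ 3))),
           ((0 : ZMod (p ^ 4)), (0 : ZMod (p ^ 2)), (p : ZMod (p ^ 3)) ^ 2)}} =
      (p - 1) ^ 2 * p ^ 20 := by
  have : Fact p.Prime := ⟨hp⟩
  open PicketSum in
  calc
    _ = Nat.card {φ : PicketSum p →+ PicketSum p //
          Bijective φ ∧ (subgroup p).map φ = subgroup p} :=
      Nat.card_congr (addAutSubtypeEquiv fun φ => (subgroup p).map φ = subgroup p)
    _ = Nat.card {φ : PicketSum p →+ PicketSum p // IsPairAutDiagonal (diagonal φ)} :=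
      Nat.card_congr (Equiv.subtypeEquivRight bijective_and_map_subgroup_eq_iff)
    _ = Nat.card {m : PicketSum p × OffDiagonal p // IsPairAutDiagonal m.1} :=
      Nat.card_congr ((endEquiv p).subtypeEquiv fun φ => by rw [endEquiv_fst])
    _ = Nat.card {u : PicketSum p // IsPairAutDiagonal u} * Nat.card (OffDiagonal p) := by
      rw [Nat.card_congr Equiv.prodSubtypeFstEquivSubtypeProd, Nat.card_prod]
    _ = (p - 1) ^ 2 * p ^ 20 := by
      rw [card_isPairAutDiagonal, card_offDiagonal]
      ring
end

section
/- Let p be a prime and let 2 ≤ ℓ < m ≤ n be integers. Consider the group homomorphism f : ℤ/p^nℤ × ℤ/p^{ℓ−2}ℤ → ℤ/p^{m−2}ℤ given by f(x, y) = x̄ + p^{m−ℓ}ȳ, where x̄ is the image of x under the canonical projection ℤ/p^nℤ → ℤ/p^{m−2}ℤ and p^{m−ℓ}ȳ is the image of y under the well-defined homomorphism ℤ/p^{ℓ−2}ℤ → ℤ/p^{m−2}ℤ induced by multiplication by p^{m−ℓ}. Then f is surjective and its kernel is the cyclic subgroup generated by (p^{m−ℓ}, −1), which has order p^{n+ℓ−m}.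 -/
/-!
Put `a = p^(m-ℓ)`, `b = p^(ℓ-2)` and `N = p^n`, so that the target of `f` is `ℤ/ab`. If
`x + a y = k a b` in `ℤ`, then `x = t a` for `t = k b - y`, and `y ≡ -t` modulo `b`;
so every element of the kernel is a multiple `t (a, -1)` of the generator. The order of `(a, -1)` is
the least common multiple of the orders `N / a` and `b` of its components, and `b` divides `N / a`
because `a b` divides `N`.
-/

theorem mem_zmultiples_natCast_neg_one_of_dvd {a b : ℕ} (N : ℕ) {x y : ℤ}
    (h : (a * b : ℤ) ∣ x + a * y) :
    ((x : ZMod N), (y : ZMod b)) ∈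
      AddSubgroup.zmultiples ((a : ZMod N), (-1 : ZMod b)) := by
  obtain ⟨k, hk⟩ := h
  have hx : x = (k * b - y) * a := by linear_combination hk
  refine AddSubgroup.mem_zmultiples_iff.mpr ⟨k * b - y, Prod.ext ?_ ?_⟩
  · simp [hx]
  · simp

theorem addOrderOf_natCast_neg_one {a b N : ℕ} (ha : a ≠ 0) (hN : a * b ∣ N) :
    addOrderOf ((a : ZMod N), (-1 : ZMod b)) = N / a := by
  have hab : b ∣ N / a := Nat.dvd_div_of_mul_dvd hN
  rw [Prod.addOrderOf_mk, addOrderOf_neg, ZMod.addOrderOf_one, ZMod.addOrderOf_coe' N ha,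
    Nat.gcd_eq_right (dvd_of_mul_right_dvd hN), Nat.lcm_eq_left hab]

theorem ker_eq_zmultiples_natCast_neg_one {a b M N : ℕ} (hM : M = a * b)
    (f : ZMod N × ZMod b →+ ZMod M)
    (hf : ∀ x y : ℤ, f ((x : ZMod N), (y : ZMod b)) = (x : ZMod M) + (a : ZMod M) * y) :
    f.ker = AddSubgroup.zmultiples ((a : ZMod N), (-1 : ZMod b)) := by
  apply le_antisymm
  · rintro ⟨u, v⟩ huv
    obtain ⟨x, rfl⟩ := ZMod.intCast_surjective u
    obtain ⟨y, rfl⟩ := ZMod.intCast_surjective v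
    have hxy : ((x + a * y : ℤ) : ZMod M) = 0 := by
      simpa only [Int.cast_add, Int.cast_mul, Int.cast_natCast, hf] using
        AddMonoidHom.mem_ker.mp huv
    apply mem_zmultiples_natCast_neg_one_of_dvd
    simpa only [hM, Nat.cast_mul] using (ZMod.intCast_zmod_eq_zero_iff_dvd _ _).mp hxy
  · rw [AddSubgroup.zmultiples_le, AddMonoidHom.mem_ker]
    simpa using hf a (-1)

theorem stmt_16_general {a b M N : ℕ} (hN : N ≠ 0) (hM : M = a * b) (hMN : M ∣ N)
    (f : ZMod N × ZMod b →+ ZMod M)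
    (hf : ∀ x y : ℤ, f ((x : ZMod N), (y : ZMod b)) = (x : ZMod M) + (a : ZMod M) * y) :
    Function.Surjective f ∧
    f.ker = AddSubgroup.zmultiples ((a : ZMod N), (-1 : ZMod b)) ∧
    Nat.card (AddSubgroup.zmultiples ((a : ZMod N), (-1 : ZMod b))) = N / a := by
  have habN : a * b ∣ N := hM ▸ hMN
  have ha : a ≠ 0 := ne_zero_of_dvd_ne_zero hN (dvd_of_mul_right_dvd habN)
  refine ⟨fun z ↦ ?_, ker_eq_zmultiples_natCast_neg_one hM f hf, ?_⟩
  · obtain ⟨x, rfl⟩ := ZMod.intCast_surjective z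
    exact ⟨(x, 0), by simpa using hf x 0⟩
  · rw [Nat.card_zmultiples, addOrderOf_natCast_neg_one ha habN]

/-- For `2 ≤ ℓ < m ≤ n`, the homomorphism
`f : ℤ/p^n × ℤ/p^{ℓ-2} → ℤ/p^{m-2}`, `f(x, y) = x̄ + p^{m-ℓ} ȳ` (characterized on integer
representatives) is surjective with kernel the cyclic subgroup generated by
`(p^{m-ℓ}, -1)`, which has order `p^{n+ℓ-m}`. -/
theorem stmt_16 (p : ℕ) (hp : p.Prime) (ℓ m n : ℕ) (h1 : 2 ≤ ℓ) (h2 : ℓ < m) (h3 : m ≤ n)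
    (f : (ZMod (p ^ n) × ZMod (p ^ (ℓ - 2))) →+ ZMod (p ^ (m - 2)))
    (hf : ∀ x y : ℤ, f ((x : ZMod (p ^ n)), (y : ZMod (p ^ (ℓ - 2)))) =
        (x : ZMod (p ^ (m - 2))) + (p : ZMod (p ^ (m - 2))) ^ (m - ℓ) * (y : ZMod (p ^ (m - 2)))) :
    Function.Surjective f ∧
    f.ker = AddSubgroup.zmultiples
        (((p : ZMod (p ^ n)) ^ (m - ℓ), (-1 : ZMod (p ^ (ℓ - 2))))) ∧
    Nat.card (AddSubgroup.zmultiples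
        (((p : ZMod (p ^ n)) ^ (m - ℓ), (-1 : ZMod (p ^ (ℓ - 2)))))) = p ^ (n + ℓ - m) := by
  have hM : p ^ (m - 2) = p ^ (m - ℓ) * p ^ (ℓ - 2) := by rw [← pow_add]; congr 1; omega
  have hcard : p ^ n / p ^ (m - ℓ) = p ^ (n + ℓ - m) := by
    rw [Nat.pow_div (by omega) hp.pos]; congr 1; omega
  simpa only [Nat.cast_pow, hcard] using
    stmt_16_general (pow_ne_zero n hp.ne_zero) hM (pow_dvd_pow p (by omega)) f
      (by simpa only [Nat.cast_pow] using hf)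
end
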